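/- (1) For all 1 ≤ i ≠ j ≤ n: Y_i·e_{ij}·(T^{−1})^-_{i−1,1}·(T^{−1})^+_{1,i−1}·Y_i^{−1} = q·T^+_{i,n−1}·T^-_{n−1,i}·e_{ij} + (q−q^{−1})^{−1}(τ−τ^{−1})·C_1, where C_1 = q·T^+_{i,n−1}·(T^{−1})^-_{j−2,i}·(Y_n − Y_n^{−1})·T^-_{n−1,j} if j > i, and C_1 = T^+_{i,n−1}·(T^{−1})^-_{j−1,1}·(T^{−1})^+_{1,n−2}·Y_{n−1}^{−1}·(Y_n² − 1)·T^-_{n−1,j}·(T^{−1})^-_{n−1,i} if i > j. (2) For all 1 ≤ i ≠ j ≤ n: Y_i·T^-_{i−1,1}·T^+_{1,i−1}·e_{ji}·Y_i^{−1} = q^{−1}·e_{ji}·(T^{−1})^+_{i,n−1}·(T^{−1})^-_{n−1,i} + (q−q^{−1})^{−1}(τ^{−1}−τ)·C_2, where C_2 = q^{−1}·(T^{−1})^+_{j,n−1}·(Y_n − Y_n^{−1})·T^+_{i,j−2}·(T^{−1})^-_{n−1,i} if j > i, and C_2 = T^+_{i,n−1}·(T^{−1})^+_{j,n−1}·Y_{n−1}·(1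 − Y_n^{−2})·T^-_{n−2,1}·T^+_{1,j−1}·(T^{−1})^-_{n−1,i} if i > j. (3) For all pairwise distinct i, j, k ∈ {1,…,n}: Y_i·ℛ^+_{ij}·e_{jk}·ℛ^-_{ik}·Y_i^{−1} = (ℛ^{−1})^+_{ki}·e_{jk}·(ℛ^{−1})^-_{ji}. -/

import Mathlib

noncomputable section

/-- The Laurent polynomial ring `R[X₁^{±1}, …, Xₙ^{±1}]` in `n` variables over `R`,
realised as the monoid algebra of the additive monoid `Fin n →₀ ℤ` of exponent vectors. -/
abbrev Laur (R : Type*) [CommRing R] (n : ℕ) : Type _ :=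
  AddMonoidAlgebra R (Fin n →₀ ℤ)

variable {R : Type*} [CommRing R] {n : ℕ}

/-- The monomial `c · X^a`. -/
def mono (a : Fin n →₀ ℤ) (c : R) : Laur R n := AddMonoidAlgebra.single a c

/-- The generator `X_i`. -/
def Xel (i : Fin n) : Laur R n := mono (Finsupp.single i 1) 1

/-- The element `X_i⁻¹`. -/
def XinvEl (i : Fin n) : Laur R n := mono (Finsupp.single i (-1)) 1

/-- Multiplication by a Laurent polynomial, as a linear endomorphism. -/
def mulOp (x : Laur R n) : Module.End R (Laur R n) := LinearMap.mulLeft R x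

/-- The operator of multiplication by `X_i`, with `ℕ`-indexing (`0`-based; junk value `1`
out of range). -/
def XOp (i : ℕ) : Module.End R (Laur R n) :=
  if h : i < n then mulOp (Xel ⟨i, h⟩) else 1

/-- The operator of multiplication by `X_i⁻¹`, with `ℕ`-indexing. -/
def XinvOp (i : ℕ) : Module.End R (Laur R n) :=
  if h : i < n then mulOp (XinvEl ⟨i, h⟩) else 1

/-- Ascending product `f s * f (s+1) * ⋯ * f (s+len-1)` (equal to `1` when `len = 0`). -/
def aF {M : Type*} [Monoid M] (f : ℕ → M) (s len : ℕ) : M :=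
  ((List.range' s len).map f).prod

/-- Descending product `f (s+len-1) * ⋯ * f (s+1) * f s` (equal to `1` when `len = 0`). -/
def dF {M : Type*} [Monoid M] (f : ℕ → M) (s len : ℕ) : M :=
  (((List.range' s len).map f).reverse).prod

/-- Integer power `u^z`, where `v` is a designated (two-sided) inverse of `u`. -/
def zpowOp {M : Type*} [Monoid M] (u v : M) (z : ℤ) : M :=
  if 0 ≤ z then u ^ z.toNat else v ^ (-z).toNat

/-- The element `(ℛ^ε)^{±}_{ij}` of the paper: for `0`-based indices, when `j < i` this is
`f_{j+1}` descending-product, then `mid`, then `g_{j+1}` ascending-product; `1` for `i ≤ j`.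
Taking `f = T, g = Ti, mid = (T j)^2` gives `ℛ⁺`;  `f = T, g = Ti, mid = (Ti j)^2` gives `ℛ⁻`;
`f = Ti, g = T, mid = (T j)^2` gives `(ℛ⁻¹)⁺`;  `f = Ti, g = T, mid = (Ti j)^2` gives `(ℛ⁻¹)⁻`. -/
def Rgen {M : Type*} [Monoid M] (f g : ℕ → M) (mid : M) (i j : ℕ) : M :=
  if j < i then dF f (j + 1) (i - j - 1) * mid * aF g (j + 1) (i - j - 1) else 1

/-!
Put `P = π⁻¹` and `D^ε_k = T_k ⋯ T_{m-1} · X_m⁻¹ Y_m^ε · T_{m-1} ⋯ T_k` for an integer `ε`, so that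
`e_{ij}` is, up to the scalar `(q - q⁻¹)⁻¹`, the difference of `X_i D^ε_j` at `ε = 1` and `ε = -1`.
The elements `D^ε_k` satisfy the same relations with `T`, `P` and `Q` as the `X_k⁻¹`; hence
`T ↦ T⁻¹`, `X ↔ D^ε`, `P ↦ P⁻¹`, `Q ↦ Q⁻¹` is an anti-duality of the double affine braid relations.
It fixes each `Y_i` up to inversion, so every relation between `Y_i` and `X_j` has a dual between
`Y_i` and `D^ε_j`.

Relation (3) already holds in the braid group for each `X_j D^ε_k`. In (1), conjugating `X_i D^ε_j`
by `Y_i` gives an element `g T_k² h` of the braid group; the quadratic relation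
`T_k² = 1 + (τ - τ⁻¹) T_k` splits it into the main term `g h` and the correction `g T_k h`, and the
difference over `ε = ±1` gives the stated formula. Relation (2) is the dual of (1).
-/

section OrderedProducts

/-- The ascending product `f i * f (i + 1) * ⋯ * f (j - 1)` over the half-open interval
`[i, j)`, equal to `1` when `j ≤ i`. -/
def asc {M : Type*} [Monoid M] (f : ℕ → M) (i j : ℕ) : M := aF f i (j - i)

/-- The descending product `f (j - 1) * ⋯ * f (i + 1) * f i` over the half-open interval
`[i, j)`, equal to `1` when `j ≤ i`. -/
def desc {M : Type*} [Monoid M] (f : ℕ → M) (i j : ℕ) : M := dF f i (j - i)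

section Monoid

variable {M : Type*} [Monoid M] (f : ℕ → M)

theorem aF_add (s a b : ℕ) : aF f s (a + b) = aF f s a * aF f (s + a) b := by
  simp only [aF, ← List.range'_append_1, List.map_append, List.prod_append]

theorem dF_add (s a b : ℕ) : dF f s (a + b) = dF f (s + a) b * dF f s a := by
  simp only [dF, ← List.range'_append_1, List.map_append, List.reverse_append, List.prod_append]

theorem aF_succ (s len : ℕ) : aF f s (len + 1) = aF f s len * f (s + len) := by
  rw [aF_add]; simp [aF]

theorem dF_succ (s len : ℕ) : dF f s (len + 1) = f (s + len) * dF f s len := by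
  rw [dF_add]; simp [dF]

variable {f}

theorem semiconjBy_aF {a : M} {s t len : ℕ}
    (h : ∀ k < len, SemiconjBy a (f (s + k)) (f (t + k))) :
    SemiconjBy a (aF f s len) (aF f t len) := by
  induction len with
  | zero => exact .one_right a
  | succ len ih =>
    rw [aF_succ, aF_succ]
    exact (ih fun k hk => h k (by lia)).mul_right (h len (by lia))

theorem semiconjBy_dF {a : M} {s t len : ℕ}
    (h : ∀ k < len, SemiconjBy a (f (s + k)) (f (t + k))) :
    SemiconjBy a (dF f s len) (dF f t len) := by
  induction len with
  | zero => exact .one_right a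
  | succ len ih =>
    rw [dF_succ, dF_succ]
    exact (h len (by lia)).mul_right (ih fun k hk => h k (by lia))

variable (f) {i j k : ℕ}

theorem asc_self (i : ℕ) : asc f i i = 1 := by simp [asc, aF]

theorem desc_self (i : ℕ) : desc f i i = 1 := by simp [desc, dF]

theorem asc_mul_asc (hij : i ≤ j) (hjk : j ≤ k) : asc f i j * asc f j k = asc f i k := by
  have h := aF_add f i (j - i) (k - j)
  rwa [show i + (j - i) = j by lia, show j - i + (k - j) = k - i by lia, eq_comm] at h

theorem desc_mul_desc (hij : i ≤ j) (hjk : j ≤ k) : desc f j k * desc f i j = desc f i k := by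
  have h := dF_add f i (j - i) (k - j)
  rwa [show i + (j - i) = j by lia, show j - i + (k - j) = k - i by lia, eq_comm] at h

theorem asc_succ_self (i : ℕ) : asc f i (i + 1) = f i := by simp [asc, aF]

theorem desc_succ_self (i : ℕ) : desc f i (i + 1) = f i := by simp [desc, dF]

theorem asc_succ_right (hij : i ≤ j) : asc f i (j + 1) = asc f i j * f j := by
  rw [← asc_mul_asc f hij j.le_succ, asc_succ_self]

theorem desc_succ_right (hij : i ≤ j) : desc f i (j + 1) = f j * desc f i j := by
  rw [← desc_mul_desc f hij j.le_succ, desc_succ_self]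

theorem asc_eq_mul_asc_succ (hij : i < j) : asc f i j = f i * asc f (i + 1) j := by
  rw [← asc_mul_asc f i.le_succ hij, asc_succ_self]

theorem desc_eq_desc_succ_mul (hij : i < j) : desc f i j = desc f (i + 1) j * f i := by
  rw [← desc_mul_desc f i.le_succ hij, desc_succ_self]

variable {f} {a : M}

theorem commute_asc (h : ∀ l, i ≤ l → l < j → Commute a (f l)) : Commute a (asc f i j) :=
  semiconjBy_aF fun k hk => h (i + k) (by lia) (by lia)

theorem commute_desc (h : ∀ l, i ≤ l → l < j → Commute a (f l)) : Commute a (desc f i j) :=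
  semiconjBy_dF fun k hk => h (i + k) (by lia) (by lia)

theorem semiconjBy_asc_succ (h : ∀ l, i ≤ l → l < j → SemiconjBy a (f l) (f (l + 1))) :
    SemiconjBy a (asc f i j) (asc f (i + 1) (j + 1)) := by
  rw [asc, asc, Nat.add_sub_add_right]
  exact semiconjBy_aF fun k hk => by
    simpa only [Nat.add_right_comm] using h (i + k) (by lia) (by lia)

theorem semiconjBy_succ_desc (h : ∀ l, i ≤ l → l < j → SemiconjBy a (f (l + 1)) (f l)) :
    SemiconjBy a (desc f (i + 1) (j + 1)) (desc f i j) := by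
  rw [desc, desc, Nat.add_sub_add_right]
  exact semiconjBy_dF fun k hk => by
    simpa only [Nat.add_right_comm] using h (i + k) (by lia) (by lia)

end Monoid

section Group

variable {G : Type*} [Group G] (u : ℕ → G)

theorem aF_inv (s len : ℕ) : aF u⁻¹ s len = (dF u s len)⁻¹ := by
  induction len with
  | zero => exact inv_one.symm
  | succ len ih => rw [aF_succ, dF_succ, ih, mul_inv_rev, Pi.inv_apply]

theorem dF_inv (s len : ℕ) : dF u⁻¹ s len = (aF u s len)⁻¹ := by
  induction len with
  | zero => exact inv_one.symm
  | succ len ih => rw [dF_succ, aF_succ, ih, mul_inv_rev, Pi.inv_apply]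

theorem aF_op_inv (s len : ℕ) :
    aF (fun k => MulOpposite.op (u k)⁻¹) s len = MulOpposite.op (aF u s len)⁻¹ := by
  induction len with
  | zero => exact congrArg MulOpposite.op inv_one.symm
  | succ len ih => rw [aF_succ, aF_succ, ih, mul_inv_rev, MulOpposite.op_mul]

theorem dF_op_inv (s len : ℕ) :
    dF (fun k => MulOpposite.op (u k)⁻¹) s len = MulOpposite.op (dF u s len)⁻¹ := by
  induction len with
  | zero => exact congrArg MulOpposite.op inv_one.symm
  | succ len ih => rw [dF_succ, dF_succ, ih, mul_inv_rev, MulOpposite.op_mul]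

/-- The element `u_{i-1} ⋯ u_{j+1} · u_j² · u_{j+1}⁻¹ ⋯ u_{i-1}⁻¹` for `j < i`, and `1`
otherwise. When `u = T` this is `ℛ⁺_{ij}`, and when `u = T⁻¹` it is `(ℛ⁻¹)⁻_{ij}`; the other two
signs are obtained by inversion. -/
def pureBraid (i j : ℕ) : G := Rgen u u⁻¹ (u j ^ 2) i j

theorem pureBraid_of_le {i j : ℕ} (h : i ≤ j) : pureBraid u i j = 1 := if_neg h.not_gt

theorem pureBraid_of_lt {i j : ℕ} (h : j < i) :
    pureBraid u i j = desc u (j + 1) i * u j ^ 2 * (desc u (j + 1) i)⁻¹ := by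
  rw [pureBraid, Rgen, if_pos h, aF_inv, desc, Nat.sub_sub]

theorem Rgen_inv_sq (i j : ℕ) : Rgen u u⁻¹ (u⁻¹ j ^ 2) i j = (pureBraid u i j)⁻¹ := by
  unfold pureBraid Rgen
  split_ifs
  · simp only [aF_inv, Pi.inv_apply, mul_inv_rev, inv_inv, inv_pow, mul_assoc]
  · exact inv_one.symm

end Group

section Units

variable {A : Type*} [Monoid A] {m : ℕ} {f g : ℕ → A} {u v : ℕ → Aˣ}

theorem coe_aF (h : ∀ k < m, f k = u k) {s len : ℕ} (hs : s + len ≤ m) :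
    aF f s len = (aF u s len).val := by
  induction len with
  | zero => rfl
  | succ len ih => rw [aF_succ, aF_succ, ih (by lia), h _ (by lia), Units.val_mul]

theorem coe_dF (h : ∀ k < m, f k = u k) {s len : ℕ} (hs : s + len ≤ m) :
    dF f s len = (dF u s len).val := by
  induction len with
  | zero => rfl
  | succ len ih => rw [dF_succ, dF_succ, ih (by lia), h _ (by lia), Units.val_mul]

theorem coe_aF_inv (h : ∀ k < m, f k = (u⁻¹ k).val) {s len : ℕ} (hs : s + len ≤ m) :
    aF f s len = (dF u s len)⁻¹.val :=
  (coe_aF h hs).trans (congrArg Units.val (aF_inv ..))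

theorem coe_dF_inv (h : ∀ k < m, f k = (u⁻¹ k).val) {s len : ℕ} (hs : s + len ≤ m) :
    dF f s len = (aF u s len)⁻¹.val :=
  (coe_dF h hs).trans (congrArg Units.val (dF_inv ..))

theorem coe_Rgen (hf : ∀ k < m, f k = u k) (hg : ∀ k < m, g k = v k) {i j : ℕ} {a : A} {s : Aˣ}
    (ha : j < i → a = s) (hi : i ≤ m) : Rgen f g a i j = (Rgen u v s i j).val := by
  unfold Rgen
  split_ifs with h
  · rw [coe_dF hf (by lia), coe_aF hg (by lia), ha h, Units.val_mul, Units.val_mul]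
  · rfl

end Units

end OrderedProducts

section Group

variable {G : Type*} [Group G] {m : ℕ}

/-- The elements `a = g s² h`, `b = g h` and `c = g s h` for some `g` and `h`. When `s` satisfies
a quadratic relation `s² = 1 + δ s` in an algebra, this yields `a = b + δ c`. -/
def IsSkeinTriple (s a b c : G) : Prop :=
  ∃ g h, a = g * s ^ 2 * h ∧ b = g * h ∧ c = g * s * h

theorem IsSkeinTriple.unop {s a b c : Gᵐᵒᵖ} (h : IsSkeinTriple s a b c) :
    IsSkeinTriple s.unop a.unop b.unop c.unop := by
  obtain ⟨g, h, rfl, rfl, rfl⟩ := h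
  exact ⟨h.unop, g.unop, by simp [mul_assoc], by simp, by simp [mul_assoc]⟩

/-- Elements `T₀, …, T_{m-1}`, `X₀, …, X_m`, `P = π⁻¹` and a central `Q` of a group which satisfy
the relations of the extended double affine braid group of type `GL_{m+1}`, apart from the
commutation of the `X_k`. Indices are `0`-based and values out of range are unconstrained. -/
structure DoubleAffineBraid (G : Type*) [Group G] (m : ℕ) where
  T : ℕ → G
  X : ℕ → G
  P : G
  Q : G
  commute_T_T : ∀ k l, k + 2 ≤ l → l < m → Commute (T k) (T l)
  braid : ∀ k, k + 1 < m → T k * T (k + 1) * T k = T (k + 1) * T k * T (k + 1)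
  commute_T_X : ∀ k l, k < m → l ≤ m → l ≠ k → l ≠ k + 1 → Commute (T k) (X l)
  T_mul_X_mul_T : ∀ k < m, T k * X k * T k = X (k + 1)
  semiconjBy_P_X : ∀ k < m, SemiconjBy P (X (k + 1)) (X k)
  P_mul_X_zero : P * X 0 = Q * X m * P
  semiconjBy_P_T : ∀ k, k + 1 < m → SemiconjBy P (T (k + 1)) (T k)
  semiconjBy_P_sq_T : 0 < m → SemiconjBy (P * P) (T 0) (T (m - 1))
  commute_Q : ∀ g, Commute Q g

namespace DoubleAffineBraid

variable (B : DoubleAffineBraid G m) {i j k l : ℕ}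

theorem commute_T_T_of_far (hk : k < m) (hl : l < m) (h : k + 2 ≤ l ∨ l + 2 ≤ k) :
    Commute (B.T k) (B.T l) :=
  h.elim (fun h => B.commute_T_T k l h hl) fun h => (B.commute_T_T l k h hk).symm

theorem semiconjBy_asc_T (hi : i ≤ l) (hl : l + 1 < j) (hj : j ≤ m) :
    SemiconjBy (asc B.T i j) (B.T l) (B.T (l + 1)) := by
  have hbraid : SemiconjBy (B.T l * B.T (l + 1)) (B.T l) (B.T (l + 1)) := by
    rw [SemiconjBy, B.braid l (by lia), mul_assoc]
  rw [← asc_mul_asc B.T hi (show l ≤ j by lia), asc_eq_mul_asc_succ B.T (show l < j by lia),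
    asc_eq_mul_asc_succ B.T hl, ← mul_assoc (B.T l)]
  refine .mul_left ?_ (hbraid.mul_left ?_)
  · exact (commute_asc fun k _ _ => B.commute_T_T_of_far (by lia) (by lia) (by lia)).symm
  · exact (commute_asc fun k _ _ => B.commute_T_T_of_far (by lia) (by lia) (by lia)).symm

theorem semiconjBy_desc_T (hi : i ≤ l) (hl : l + 1 < j) (hj : j ≤ m) :
    SemiconjBy (desc B.T i j) (B.T (l + 1)) (B.T l) := by
  have hbraid : SemiconjBy (B.T (l + 1) * B.T l) (B.T (l + 1)) (B.T l) := by
    rw [SemiconjBy, ← B.braid l (by lia), mul_assoc]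
  rw [← desc_mul_desc B.T hi (show l ≤ j by lia), desc_eq_desc_succ_mul B.T (show l < j by lia),
    desc_eq_desc_succ_mul B.T hl, mul_assoc (desc B.T (l + 1 + 1) j)]
  refine .mul_left (.mul_left ?_ hbraid) ?_
  · exact (commute_desc fun k _ _ => B.commute_T_T_of_far (by lia) (by lia) (by lia)).symm
  · exact (commute_desc fun k _ _ => B.commute_T_T_of_far (by lia) (by lia) (by lia)).symm

theorem commute_asc_X (hj : j ≤ m) (hk : k ≤ m) (h : k + 1 ≤ i ∨ j + 1 ≤ k) :
    Commute (asc B.T i j) (B.X k) :=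
  (commute_asc fun l _ _ => (B.commute_T_X l k (by lia) hk (by lia) (by lia)).symm).symm

theorem commute_desc_X (hj : j ≤ m) (hk : k ≤ m) (h : k + 1 ≤ i ∨ j + 1 ≤ k) :
    Commute (desc B.T i j) (B.X k) :=
  (commute_desc fun l _ _ => (B.commute_T_X l k (by lia) hk (by lia) (by lia)).symm).symm

theorem desc_mul_X_mul_asc (hij : i ≤ j) (hj : j ≤ m) :
    desc B.T i j * B.X i * asc B.T i j = B.X j := by
  induction j, hij using Nat.le_induction with
  | base => rw [desc_self, asc_self, one_mul, mul_one]
  | succ j hij ih =>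
    rw [asc_succ_right _ hij, desc_succ_right _ hij, ← B.T_mul_X_mul_T j hj, ← ih (by lia)]
    simp only [mul_assoc]

/-- The element `Y_i = T_i ⋯ T_{m-1} · π⁻¹ · T₀⁻¹ ⋯ T_{i-1}⁻¹`. -/
def Y (i : ℕ) : G := asc B.T i m * B.P * (desc B.T 0 i)⁻¹

theorem Y_last : B.Y m = B.P * (desc B.T 0 m)⁻¹ := by rw [Y, asc_self, one_mul]

theorem Y_eq_asc_mul_Y_mul_desc (hij : i ≤ j) (hj : j ≤ m) :
    B.Y i = asc B.T i j * B.Y j * desc B.T i j := by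
  rw [Y, Y, ← asc_mul_asc B.T hij hj, ← desc_mul_desc B.T i.zero_le hij]
  group

theorem commute_Y_T (hi : i ≤ m) (hl : l < m) (h : i + 1 ≤ l ∨ l + 2 ≤ i) :
    Commute (B.Y i) (B.T l) := by
  rcases h with h | h
  · obtain ⟨k, rfl⟩ : ∃ k, l = k + 1 := ⟨l - 1, by lia⟩
    have hdesc : Commute (desc B.T 0 i) (B.T (k + 1)) :=
      (commute_desc fun p _ _ => B.commute_T_T_of_far (by lia) (by lia) (by lia)).symm
    exact ((B.semiconjBy_asc_T (by lia) hl le_rfl).mul_left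
      (B.semiconjBy_P_T k hl)).mul_left hdesc.inv_left
  · have hasc : Commute (asc B.T i m) (B.T l) :=
      (commute_asc fun p _ _ => B.commute_T_T_of_far (by lia) (by lia) (by lia)).symm
    exact (SemiconjBy.mul_left hasc (B.semiconjBy_P_T l (by lia))).mul_left
      (B.semiconjBy_desc_T l.zero_le (by lia) hi).inv_symm_left

theorem Y_mul_desc_zero : B.Y i * desc B.T 0 i = asc B.T i m * B.P := by
  rw [Y, inv_mul_cancel_right]

theorem commute_Y_last_T_mul_P (hm : 0 < m) : Commute (B.Y m) (B.T (m - 1) * B.P) := by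
  obtain ⟨r, rfl⟩ : ∃ r, m = r + 1 := ⟨m - 1, by lia⟩
  have hP : SemiconjBy B.P (desc B.T 1 (r + 1)) (desc B.T 0 r) :=
    semiconjBy_succ_desc fun l _ hl => B.semiconjBy_P_T l (by lia)
  have hPP : B.P * B.P * B.T 0 = B.T r * (B.P * B.P) := (B.semiconjBy_P_sq_T hm).eq
  rw [Y_last, Nat.add_sub_cancel]
  calc B.P * (desc B.T 0 (r + 1))⁻¹ * (B.T r * B.P)
      = B.P * ((desc B.T 0 r)⁻¹ * B.P) := by rw [desc_succ_right B.T r.zero_le]; group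
    _ = B.P * B.P * B.T 0 * (desc B.T 0 (r + 1))⁻¹ := by
      rw [← hP.inv_right.eq, desc_eq_desc_succ_mul B.T r.succ_pos]; group
    _ = B.T r * B.P * (B.P * (desc B.T 0 (r + 1))⁻¹) := by rw [hPP]; simp only [mul_assoc]

theorem commute_Y_last_desc (k : ℕ) (hj : j < m) : Commute (B.Y m) (desc B.T k j) :=
  commute_desc fun _ _ _ => B.commute_Y_T le_rfl (by lia) (by lia)

theorem commute_Y_last_asc (k : ℕ) (hj : j < m) : Commute (B.Y m) (asc B.T k j) :=
  commute_asc fun _ _ _ => B.commute_Y_T le_rfl (by lia) (by lia)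

theorem Y_pred_mul_desc (hm : 0 < m) : B.Y (m - 1) * desc B.T 0 (m - 1) = B.T (m - 1) * B.P := by
  obtain ⟨r, rfl⟩ : ∃ r, m = r + 1 := ⟨m - 1, by lia⟩
  rw [Y_mul_desc_zero, Nat.add_sub_cancel, asc_succ_self]

theorem commute_Y_last_Y (hi : i ≤ m) : Commute (B.Y m) (B.Y i) := by
  rcases hi.eq_or_lt with rfl | hi
  · exact .refl _
  rw [B.Y_eq_asc_mul_Y_mul_desc (show i ≤ m - 1 by lia) (by lia),
    eq_mul_inv_of_mul_eq (B.Y_pred_mul_desc (by lia))]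
  exact ((B.commute_Y_last_asc i (by lia)).mul_right
    ((B.commute_Y_last_T_mul_P (by lia)).mul_right
      (B.commute_Y_last_desc 0 (by lia)).inv_right)).mul_right (B.commute_Y_last_desc i (by lia))

/-- The element `D^ε_k = T_k ⋯ T_{m-1} · X_m⁻¹ Y_m^ε · T_{m-1} ⋯ T_k`. The operator `D_k` of the
paper is `(q - q⁻¹)⁻¹ • (D¹_k - D⁻¹_k)`. -/
def D (ε : ℤ) (k : ℕ) : G := asc B.T k m * ((B.X m)⁻¹ * B.Y m ^ ε) * desc B.T k m

variable (ε : ℤ)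

theorem D_last : B.D ε m = (B.X m)⁻¹ * B.Y m ^ ε := by
  rw [D, asc_self, desc_self, one_mul, mul_one]

theorem T_mul_D_mul_T (hk : k < m) : B.T k * B.D ε (k + 1) * B.T k = B.D ε k := by
  rw [D, D, asc_eq_mul_asc_succ B.T hk, desc_eq_desc_succ_mul B.T hk]
  simp only [mul_assoc]

theorem X_mul_D (hk : k ≤ m) : B.X k * B.D ε k = (desc B.T k m)⁻¹ * B.Y m ^ ε * desc B.T k m := by
  rw [D, ← B.desc_mul_X_mul_asc hk le_rfl]
  group

theorem commute_T_D (hl : l < m) (hk : k ≤ m) (h : k + 1 ≤ l ∨ l + 2 ≤ k) :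
    Commute (B.T l) (B.D ε k) := by
  have hlast : ∀ l, l + 1 < m → Commute (B.T l) ((B.X m)⁻¹ * B.Y m ^ ε) := fun l hl =>
    (B.commute_T_X l m (by lia) le_rfl (by lia) (by lia)).inv_right.mul_right
      ((B.commute_Y_T le_rfl (by lia) (by lia)).zpow_left ε).symm
  rcases h with h | h
  · obtain ⟨r, rfl⟩ : ∃ r, l = r + 1 := ⟨l - 1, by lia⟩
    exact Commute.symm <| ((B.semiconjBy_asc_T (by lia) hl le_rfl).mul_left
      (hlast r hl).symm).mul_left (B.semiconjBy_desc_T (by lia) hl le_rfl)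
  · refine (Commute.mul_right ?_ (hlast l (by lia))).mul_right ?_
    · exact commute_asc fun p _ _ => B.commute_T_T_of_far hl (by lia) (by lia)
    · exact commute_desc fun p _ _ => B.commute_T_T_of_far hl (by lia) (by lia)

theorem commute_asc_D (hj : j ≤ m) (hk : k ≤ m) (h : k + 1 ≤ i ∨ j + 1 ≤ k) :
    Commute (asc B.T i j) (B.D ε k) :=
  (commute_asc fun _ _ _ => (B.commute_T_D ε (by lia) hk (by lia)).symm).symm

theorem semiconjBy_P_D (hk : k < m) : SemiconjBy B.P (B.D ε (k + 1)) (B.D ε k) := by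
  have hX := (B.semiconjBy_P_X k hk).inv_right.eq
  have hY : Commute (B.Y m ^ ε) (desc B.T k m * B.P * (desc B.T (k + 1) m)⁻¹) := by
    obtain ⟨r, rfl⟩ : ∃ r, m = r + 1 := ⟨m - 1, by lia⟩
    have hP : SemiconjBy B.P (desc B.T (k + 1) (r + 1)) (desc B.T k r) :=
      semiconjBy_succ_desc fun l _ hl => B.semiconjBy_P_T l (by lia)
    rw [desc_succ_right B.T (by lia), mul_assoc (B.T r), ← hP.eq, ← mul_assoc,
      mul_inv_cancel_right]
    exact (B.commute_Y_last_T_mul_P (by lia)).zpow_left ε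
  rw [SemiconjBy, ← inv_mul_cancel_left (B.X (k + 1)) (B.D ε (k + 1)),
    ← inv_mul_cancel_left (B.X k) (B.D ε k), B.X_mul_D ε hk.le, B.X_mul_D ε hk]
  calc B.P * ((B.X (k + 1))⁻¹ * ((desc B.T (k + 1) m)⁻¹ * B.Y m ^ ε * desc B.T (k + 1) m))
      = (B.X k)⁻¹ * (desc B.T k m)⁻¹ *
          ((desc B.T k m * B.P * (desc B.T (k + 1) m)⁻¹) * B.Y m ^ ε) * desc B.T (k + 1) m := by
        rw [← mul_assoc, hX]; group
    _ = _ := by rw [← hY.eq]; group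

theorem P_mul_D_zero : B.P * B.D ε 0 = B.Q⁻¹ * B.D ε m * B.P := by
  have hX : B.P * (B.X 0)⁻¹ = (B.Q * B.X m)⁻¹ * B.P := by
    rw [eq_inv_mul_iff_mul_eq, ← mul_assoc, ← B.P_mul_X_zero, mul_inv_cancel_right]
  have hP : B.P = B.Y m * desc B.T 0 m := by rw [Y_last, inv_mul_cancel_right]
  calc B.P * B.D ε 0 = B.P * (B.X 0)⁻¹ * (B.X 0 * B.D ε 0) := by group
    _ = (B.X m * B.Q)⁻¹ * (B.P * (desc B.T 0 m)⁻¹) * B.Y m ^ ε * desc B.T 0 m := by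
      rw [hX, B.X_mul_D ε m.zero_le, (B.commute_Q _).eq]; group
    _ = B.Q⁻¹ * B.D ε m * B.P := by
      rw [← Y_last, B.D_last, hP]; group

open MulOpposite in
/-- The duality `T ↦ T⁻¹`, `X ↔ D^ε`, `P ↦ P⁻¹`, `Q ↦ Q⁻¹`. It reverses products and is therefore
encoded by the opposite group. -/
@[simps]
def dual : DoubleAffineBraid Gᵐᵒᵖ m where
  T k := op (B.T k)⁻¹
  X k := op (B.D ε k)
  P := op B.P⁻¹
  Q := op B.Q⁻¹
  commute_T_T k l hkl hl := (B.commute_T_T k l hkl hl).inv_inv.op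
  braid k hk := by simpa [mul_assoc] using congrArg (fun g => op g⁻¹) (B.braid k hk)
  commute_T_X k l hk hl h h' := (B.commute_T_D ε hk hl (by lia)).inv_left.op
  T_mul_X_mul_T k hk := by rw [← B.T_mul_D_mul_T ε hk]; simp [mul_assoc]
  semiconjBy_P_X k hk := (B.semiconjBy_P_D ε hk).inv_symm_left.op
  P_mul_X_zero := by
    rw [← op_mul, ← op_mul, ← op_mul, op_inj, eq_inv_mul_iff_mul_eq, ← mul_assoc,
      B.P_mul_D_zero, mul_inv_cancel_right]
    exact (B.commute_Q _).inv_left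
  semiconjBy_P_T k hk := (B.semiconjBy_P_T k hk).inv_inv_symm.op
  semiconjBy_P_sq_T hm := by
    simpa using (B.semiconjBy_P_sq_T hm).inv_inv_symm.op
  commute_Q g := (B.commute_Q g.unop).inv_left.op

/-- The element `T_{i-1} ⋯ T₀ · T₀ ⋯ T_{i-1}`. -/
def J (i : ℕ) : G := desc B.T 0 i * asc B.T 0 i

/-- The element `T_i ⋯ T_{m-1} · T_{m-1} ⋯ T_i`. -/
def K (i : ℕ) : G := asc B.T i m * desc B.T i m

/-- The element `ℛ⁺_{ij}` of the paper. -/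
def ℛ (i j : ℕ) : G := pureBraid B.T i j

/-- The element `(ℛ⁻¹)⁻_{ij}` of the paper. -/
def ℛbar (i j : ℕ) : G := pureBraid B.T⁻¹ i j

theorem Y_mul_J : B.Y i * B.J i = asc B.T i m * B.P * asc B.T 0 i := by
  rw [J, ← mul_assoc, Y_mul_desc_zero]

theorem K_mul_X (hi : i ≤ m) : B.K i * B.X i = asc B.T i m * B.X m * (asc B.T i m)⁻¹ := by
  rw [K, eq_mul_inv_iff_mul_eq, ← B.desc_mul_X_mul_asc hi le_rfl]
  simp only [mul_assoc]

theorem Y_mul_X (hi : i ≤ m) : B.Y i * B.X i = B.Q * B.K i * B.X i * (B.Y i * B.J i) := by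
  calc B.Y i * B.X i = asc B.T i m * (B.P * B.X 0) * asc B.T 0 i := by
        rw [Y, ← B.desc_mul_X_mul_asc i.zero_le hi]; group
    _ = asc B.T i m * B.Q * (B.X m * B.P * asc B.T 0 i) := by
        rw [B.P_mul_X_zero]; simp only [mul_assoc]
    _ = B.Q * (B.K i * B.X i) * (B.Y i * B.J i) := by
        rw [← (B.commute_Q _).eq, B.K_mul_X hi, B.Y_mul_J]; group
    _ = B.Q * B.K i * B.X i * (B.Y i * B.J i) := by simp only [mul_assoc]

theorem ℛ_of_lt (h : j < i) :
    B.ℛ i j = desc B.T (j + 1) i * B.T j ^ 2 * (desc B.T (j + 1) i)⁻¹ :=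
  pureBraid_of_lt B.T h

theorem ℛbar_of_lt (h : i < j) :
    B.ℛbar j i = (asc B.T (i + 1) j)⁻¹ * (B.T i ^ 2)⁻¹ * asc B.T (i + 1) j := by
  rw [ℛbar, pureBraid_of_lt _ h, desc, dF_inv, inv_inv, Pi.inv_apply, inv_pow]
  rfl

theorem ℛbar_succ (hij : i ≤ j) (hj : j < m) :
    B.ℛbar (j + 1) i = asc B.T i j * (B.T j ^ 2)⁻¹ * (asc B.T i j)⁻¹ := by
  have hS : SemiconjBy (asc B.T i (j + 1)) (asc B.T i j) (asc B.T (i + 1) (j + 1)) :=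
    semiconjBy_asc_succ fun l hi hl => B.semiconjBy_asc_T hi (by lia) hj
  have hTi : (B.T i)⁻¹ = asc B.T (i + 1) (j + 1) * (asc B.T i (j + 1))⁻¹ := by
    rw [asc_eq_mul_asc_succ B.T (by lia : i < j + 1)]
    group
  have hTj : (B.T j)⁻¹ = (asc B.T i (j + 1))⁻¹ * asc B.T i j := by
    rw [asc_succ_right B.T hij]
    group
  have hconj : (asc B.T i (j + 1))⁻¹ * asc B.T (i + 1) (j + 1) =
      asc B.T i j * (asc B.T i (j + 1))⁻¹ := hS.inv_symm_left.eq
  rw [B.ℛbar_of_lt (by lia), ← inv_pow, ← inv_pow, hTi, hTj, pow_two, pow_two]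
  calc _ = (asc B.T i (j + 1))⁻¹ * asc B.T (i + 1) (j + 1) *
          ((asc B.T i (j + 1))⁻¹ * asc B.T (i + 1) (j + 1)) := by group
    _ = _ := by rw [hconj]; group

theorem commute_ℛbar {g : G} (h : ∀ l, i ≤ l → l < j → Commute g (B.T l)) :
    Commute g (B.ℛbar j i) := by
  rcases le_or_gt j i with hij | hij
  · rw [ℛbar, pureBraid_of_le _ hij]
    exact .one_right g
  · have hasc : Commute g (asc B.T (i + 1) j) := commute_asc fun l hi hl => h l (by lia) hl
    rw [B.ℛbar_of_lt hij]
    exact (hasc.inv_right.mul_right (((h i le_rfl hij).pow_right 2).inv_right)).mul_right hasc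

theorem T_mul_X (hk : k < m) : B.T k * B.X k = B.X (k + 1) * (B.T k)⁻¹ := by
  rw [← B.T_mul_X_mul_T k hk, mul_inv_cancel_right]

theorem Y_mul_X_of_lt (hij : i < j) (hj : j ≤ m) :
    B.Y i * B.X j = B.X j * B.ℛbar j i * B.Y i := by
  obtain ⟨r, rfl⟩ : ∃ r, j = r + 1 := ⟨j - 1, by lia⟩
  have hX : SemiconjBy (B.P * (desc B.T 0 i)⁻¹) (B.X (r + 1)) (B.X r) :=
    (B.semiconjBy_P_X r hj).mul_left (B.commute_desc_X (by lia) hj (by lia)).inv_left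
  have hup : Commute (asc B.T (r + 1) m) (B.X r) := B.commute_asc_X le_rfl (by lia) (by lia)
  have hlow : Commute (asc B.T i r) (B.X (r + 1)) := B.commute_asc_X (by lia) hj (by lia)
  rw [B.ℛbar_succ (by lia) hj, Y,
    ← asc_mul_asc B.T (by lia : i ≤ r) (by lia : r ≤ m), asc_eq_mul_asc_succ B.T (by lia : r < m)]
  calc _ = asc B.T i r * B.T r * asc B.T (r + 1) m *
          (B.P * (desc B.T 0 i)⁻¹ * B.X (r + 1)) := by group
    _ = asc B.T i r * B.T r * (asc B.T (r + 1) m * B.X r) * (B.P * (desc B.T 0 i)⁻¹) := by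
      rw [hX.eq]; group
    _ = asc B.T i r * (B.T r * B.X r) * asc B.T (r + 1) m * (B.P * (desc B.T 0 i)⁻¹) := by
      rw [hup.eq]; group
    _ = (asc B.T i r * B.X (r + 1)) * (B.T r)⁻¹ * asc B.T (r + 1) m *
          (B.P * (desc B.T 0 i)⁻¹) := by rw [B.T_mul_X (by lia)]; group
    _ = _ := by rw [hlow.eq]; group

theorem Y_mul_ℛ_mul_X_of_lt (hji : j < i) (hi : i ≤ m) :
    B.Y i * B.ℛ i j * B.X j = B.X j * B.Y i := by
  have hup : Commute (desc B.T (j + 1) i) (B.X j) := B.commute_desc_X hi (by lia) (by lia)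
  have hlow : SemiconjBy (asc B.T i m * B.P * (desc B.T 0 j)⁻¹) (B.X (j + 1)) (B.X j) :=
    (SemiconjBy.mul_left (B.commute_asc_X le_rfl (by lia) (by lia))
      (B.semiconjBy_P_X j (by lia))).mul_left (B.commute_desc_X (by lia) (by lia) (by lia)).inv_left
  have hdesc : desc B.T 0 i = desc B.T (j + 1) i * B.T j * desc B.T 0 j := by
    rw [← desc_mul_desc B.T j.zero_le hji.le, desc_eq_desc_succ_mul B.T hji]
  rw [B.ℛ_of_lt hji, Y, hdesc]
  calc _ = asc B.T i m * B.P * (desc B.T 0 j)⁻¹ * B.T j *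
          ((desc B.T (j + 1) i)⁻¹ * B.X j) := by group
    _ = asc B.T i m * B.P * (desc B.T 0 j)⁻¹ * (B.T j * B.X j) * (desc B.T (j + 1) i)⁻¹ := by
      rw [hup.inv_left.eq]; group
    _ = asc B.T i m * B.P * (desc B.T 0 j)⁻¹ * B.X (j + 1) *
          ((B.T j)⁻¹ * (desc B.T (j + 1) i)⁻¹) := by rw [B.T_mul_X (by lia)]; group
    _ = _ := by rw [hlow.eq]; group

theorem Y_mul_ℛ_mul_X (hi : i ≤ m) (hj : j ≤ m) (hij : i ≠ j) :
    B.Y i * B.ℛ i j * B.X j = B.X j * B.ℛbar j i * B.Y i := by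
  rcases hij.lt_or_gt with hij | hji
  · rw [ℛ, pureBraid_of_le _ hij.le, mul_one, B.Y_mul_X_of_lt hij hj]
  · rw [ℛbar, pureBraid_of_le _ hji.le, mul_one, B.Y_mul_ℛ_mul_X_of_lt hji hi]

theorem commute_X_mul_ℛbar (hij : i < j) (hjk : j < k) (hk : k ≤ m) :
    Commute (B.X j * B.ℛbar j i) (B.ℛbar k i) := by
  obtain ⟨r, rfl⟩ : ∃ r, j = r + 1 := ⟨j - 1, by lia⟩
  obtain ⟨p, rfl⟩ : ∃ p, k = p + 1 := ⟨k - 1, by lia⟩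
  have hlow : Commute (asc B.T i r) (B.X (r + 1)) := B.commute_asc_X (by lia) (by lia) (by lia)
  have hX : B.X (r + 1) * B.ℛbar (r + 1) i =
      asc B.T i (r + 1) * B.X r * (asc B.T i (r + 1))⁻¹ := by
    rw [B.ℛbar_succ (by lia) (by lia), ← mul_assoc, ← mul_assoc, ← hlow.eq,
      ← B.T_mul_X_mul_T r (by lia), asc_succ_right B.T (by lia)]
    group
  have hR : B.ℛbar (p + 1) i =
      asc B.T i (r + 1) * B.ℛbar (p + 1) (r + 1) * (asc B.T i (r + 1))⁻¹ := by
    rw [B.ℛbar_succ (by lia) hk, B.ℛbar_succ (by lia) hk,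
      ← asc_mul_asc B.T (by lia : i ≤ r + 1) (by lia : r + 1 ≤ p)]
    group
  rw [hX, hR, Commute.conj_iff]
  exact B.commute_ℛbar fun l _ _ => (B.commute_T_X l r (by lia) (by lia) (by lia) (by lia)).symm

open MulOpposite

theorem asc_dual (i j : ℕ) : asc (B.dual ε).T i j = op (asc B.T i j)⁻¹ := aF_op_inv B.T i (j - i)

theorem desc_dual (i j : ℕ) : desc (B.dual ε).T i j = op (desc B.T i j)⁻¹ :=
  dF_op_inv B.T i (j - i)

theorem Y_dual (i : ℕ) : (B.dual ε).Y i = op (B.Y i)⁻¹ := by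
  simp only [Y, asc_dual, desc_dual, dual_P, ← op_inv, ← op_mul, mul_inv_rev, inv_inv]

theorem D_neg_dual (hk : k ≤ m) : (B.dual ε).D (-ε) k = op (B.X k) := by
  rw [D, asc_dual, desc_dual, Y_dual, dual_X, D_last, ← B.desc_mul_X_mul_asc hk le_rfl]
  simp only [← op_inv, ← op_mul, ← op_zpow]
  exact congrArg op (by group)

theorem J_dual (i : ℕ) : (B.dual ε).J i = op (B.J i)⁻¹ := by
  simp only [J, asc_dual, desc_dual, ← op_mul, mul_inv_rev]

theorem K_dual (i : ℕ) : (B.dual ε).K i = op (B.K i)⁻¹ := by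
  simp only [K, asc_dual, desc_dual, ← op_mul, mul_inv_rev]

theorem ℛ_dual (i j : ℕ) : (B.dual ε).ℛ i j = op (B.ℛ i j)⁻¹ := by
  rcases lt_or_ge j i with h | h
  · rw [ℛ_of_lt _ h, ℛ_of_lt _ h, desc_dual, dual_T]
    simp only [← op_inv, ← op_mul, ← op_pow]
    exact congrArg op (by group)
  · simp only [ℛ, pureBraid_of_le _ h, inv_one, op_one]

theorem ℛbar_dual (i j : ℕ) : (B.dual ε).ℛbar i j = op (B.ℛbar i j)⁻¹ := by
  rcases lt_or_ge j i with h | h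
  · rw [ℛbar_of_lt _ h, ℛbar_of_lt _ h, asc_dual, dual_T]
    simp only [← op_inv, ← op_mul, ← op_pow]
    exact congrArg op (by group)
  · simp only [ℛbar, pureBraid_of_le _ h, inv_one, op_one]

theorem ℛbar_mul_Y_mul_D (hi : i ≤ m) (hj : j ≤ m) (hij : i ≠ j) :
    B.ℛbar j i * B.Y i * B.D ε j = B.D ε j * B.Y i * B.ℛ i j := by
  have h := congrArg unop ((B.dual ε).Y_mul_ℛ_mul_X hi hj hij)
  rw [ℛ_dual, ℛbar_dual, Y_dual, dual_X] at h
  have h' : B.D ε j * ((B.ℛ i j)⁻¹ * (B.Y i)⁻¹) = (B.Y i)⁻¹ * ((B.ℛbar j i)⁻¹ * B.D ε j) := h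
  rw [mul_assoc (B.D ε j), ← mul_inv_eq_iff_eq_mul, mul_inv_rev, mul_assoc, h']
  group

theorem commute_ℛbar_inv_mul_D (hik : i < k) (hkj : k < j) (hj : j ≤ m) :
    Commute ((B.ℛbar k i)⁻¹ * B.D ε k) (B.ℛbar j i) := by
  have h := (B.dual ε).commute_X_mul_ℛbar hik hkj hj
  rw [ℛbar_dual, ℛbar_dual, dual_X, ← op_mul] at h
  simpa using h.unop.inv_right

theorem Y_mul_ℛ_mul_X_mul_D (hi : i ≤ m) (hj : j ≤ m) (hk : k ≤ m) (hij : i ≠ j)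
    (hjk : j ≠ k) (hik : i ≠ k) :
    B.Y i * B.ℛ i j * (B.X j * B.D ε k) * (B.ℛ i k)⁻¹ * (B.Y i)⁻¹ =
      (B.ℛbar k i)⁻¹ * (B.X j * B.D ε k) * B.ℛbar j i := by
  have hX : ∀ {k}, k ≤ m → j < i ∨ k < j → Commute (B.X j) (B.ℛbar k i) := fun hk h =>
    B.commute_ℛbar fun l _ _ => (B.commute_T_X l j (by lia) hj (by lia) (by lia)).symm
  have hD : ∀ {j}, j ≤ m → k < i ∨ j < k → Commute (B.D ε k) (B.ℛbar j i) := fun hj h =>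
    B.commute_ℛbar fun l _ _ => (B.commute_T_D ε (by lia) hk (by lia)).symm
  have hℛ : ∀ {j}, j ≤ i → B.ℛbar j i = 1 := pureBraid_of_le _
  have hcomm : B.X j * B.ℛbar j i * ((B.ℛbar k i)⁻¹ * B.D ε k) =
      (B.ℛbar k i)⁻¹ * (B.X j * B.D ε k) * B.ℛbar j i := by
    rcases hij.lt_or_gt with hij | hji
    · rcases hik.lt_or_gt with hik | hki
      · rcases hjk.lt_or_gt with hjk | hkj
        · have h := (B.commute_X_mul_ℛbar hij hjk hk).inv_right
          rw [← mul_assoc, h.eq, mul_assoc, mul_assoc, ← (hD hj (.inr hjk)).eq]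
          simp only [mul_assoc]
        · have h := B.commute_ℛbar_inv_mul_D ε hik hkj hj
          rw [mul_assoc, ← h.eq, ← mul_assoc, ← mul_assoc, (hX hk (.inr hkj)).inv_right.eq]
          simp only [mul_assoc]
      · rw [hℛ hki.le, inv_one, one_mul, one_mul, mul_assoc, mul_assoc, (hD hj (.inl hki)).eq]
    · rw [hℛ hji.le, mul_one, mul_one, ← mul_assoc, (hX hk (.inl hji)).inv_right.eq, mul_assoc]
  have hY : B.Y i * B.D ε k * (B.ℛ i k)⁻¹ * (B.Y i)⁻¹ = (B.ℛbar k i)⁻¹ * B.D ε k := by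
    rw [eq_inv_mul_iff_mul_eq, ← mul_assoc, ← mul_assoc, ← mul_assoc,
      B.ℛbar_mul_Y_mul_D ε hi hk hik]
    group
  calc _ = B.Y i * B.ℛ i j * B.X j * (B.D ε k * (B.ℛ i k)⁻¹ * (B.Y i)⁻¹) := by
        simp only [mul_assoc]
    _ = B.X j * B.ℛbar j i * (B.Y i * B.D ε k * (B.ℛ i k)⁻¹ * (B.Y i)⁻¹) := by
        rw [B.Y_mul_ℛ_mul_X hi hj hij]; simp only [mul_assoc]
    _ = _ := by rw [hY, hcomm]

theorem Y_mul_X_mul_D_mul_J_inv (hi : i ≤ m) :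
    B.Y i * (B.X i * B.D ε j) * (B.J i)⁻¹ * (B.Y i)⁻¹ =
      B.Q * B.K i * B.X i * (B.Y i * B.J i * B.D ε j * (B.Y i * B.J i)⁻¹) := by
  rw [← mul_assoc, B.Y_mul_X hi]
  group

theorem isSkeinTriple_of_lt (hij : i < j) (hj : j ≤ m) :
    IsSkeinTriple (B.T (j - 1)) (B.Y i * (B.X i * B.D ε j) * (B.J i)⁻¹ * (B.Y i)⁻¹)
      (B.Q * B.K i * (B.X i * B.D ε j))
      (B.Q * asc B.T i m * (asc B.T i (j - 1))⁻¹ * B.Y m ^ ε * desc B.T j m) := by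
  obtain ⟨r, rfl⟩ : ∃ r, j = r + 1 := ⟨j - 1, by lia⟩
  have hasc : asc B.T i m = asc B.T i r * B.T r * asc B.T (r + 1) m := by
    rw [← asc_succ_right B.T (by lia), asc_mul_asc B.T hij.le hj]
  have hSD : Commute (asc B.T i r) (B.D ε (r + 1)) := B.commute_asc_D ε (by lia) hj (by lia)
  have hSX : Commute (asc B.T i r) (B.X m) := B.commute_asc_X (by lia) le_rfl (by lia)
  have hSS : Commute (asc B.T i r) (asc B.T (r + 1) m) :=
    commute_asc fun l _ _ => (commute_asc fun p _ _ =>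
      B.commute_T_T_of_far (by lia) (by lia) (by lia)).symm
  have hPD : SemiconjBy (asc B.T (r + 1) m * B.P * asc B.T 0 i) (B.D ε (r + 1)) (B.D ε r) :=
    (SemiconjBy.mul_left (B.commute_asc_D ε le_rfl (by lia) (by lia))
      (B.semiconjBy_P_D ε (by lia))).mul_left (B.commute_asc_D ε (by lia) hj (by lia))
  have hYJ : B.Y i * B.J i * B.D ε (r + 1) * (B.Y i * B.J i)⁻¹ =
      asc B.T i r * B.T r ^ 2 * (asc B.T i r)⁻¹ * B.D ε (r + 1) := by
    rw [mul_inv_eq_iff_eq_mul, Y_mul_J, hasc, pow_two]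
    calc _ = asc B.T i r * B.T r *
            (asc B.T (r + 1) m * B.P * asc B.T 0 i * B.D ε (r + 1)) := by group
      _ = asc B.T i r * (B.T r * B.T r) * B.D ε (r + 1) * B.T r *
            (asc B.T (r + 1) m * B.P * asc B.T 0 i) := by
        rw [hPD.eq, ← B.T_mul_D_mul_T ε (by lia)]; group
      _ = asc B.T i r * (B.T r * B.T r) * ((asc B.T i r)⁻¹ * B.D ε (r + 1)) * asc B.T i r *
            B.T r * (asc B.T (r + 1) m * B.P * asc B.T 0 i) := by rw [hSD.inv_left.eq]; group
      _ = _ := by group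
  refine ⟨B.Q * B.K i * B.X i * asc B.T i r, (asc B.T i r)⁻¹ * B.D ε (r + 1), ?_, by group, ?_⟩
  · rw [B.Y_mul_X_mul_D_mul_J_inv ε (by lia), hYJ, Nat.add_sub_cancel]
    simp only [mul_assoc]
  · rw [mul_assoc B.Q (B.K i), B.K_mul_X (by lia), Nat.add_sub_cancel, D]
    symm
    calc _ = B.Q * asc B.T i m * B.X m * ((asc B.T (r + 1) m)⁻¹ *
            ((asc B.T i r)⁻¹ * asc B.T (r + 1) m)) * ((B.X m)⁻¹ * B.Y m ^ ε) *
            desc B.T (r + 1) m := by rw [hasc]; group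
      _ = B.Q * asc B.T i m * (B.X m * (asc B.T i r)⁻¹) * (B.X m)⁻¹ * B.Y m ^ ε *
            desc B.T (r + 1) m := by rw [hSS.inv_left.eq]; group
      _ = _ := by rw [hSX.symm.inv_right.eq]; group

theorem K_mul_X_mul_asc_mul_P_mul_asc (hi : i ≤ m) (hj : j ≤ m) :
    B.Q * B.K i * B.X i * (asc B.T i m * B.P * asc B.T 0 j) =
      asc B.T i m * B.P * (desc B.T 0 j)⁻¹ * B.X j := by
  calc _ = B.Q * (B.K i * B.X i) * (asc B.T i m * B.P * asc B.T 0 j) := by group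
    _ = B.Q * asc B.T i m * (B.X m * B.P) * asc B.T 0 j := by rw [B.K_mul_X hi]; group
    _ = asc B.T i m * (B.Q * B.X m * B.P) * asc B.T 0 j := by rw [(B.commute_Q _).eq]; group
    _ = _ := by rw [← B.P_mul_X_zero, ← B.desc_mul_X_mul_asc j.zero_le hj]; group

theorem P_mul_desc_inv_mul_X_mul_D (hjm : j < m) :
    B.P * (desc B.T 0 j)⁻¹ * (B.X j * B.D ε j) * (B.T j)⁻¹ * (B.P * asc B.T 0 j)⁻¹ =
      (asc B.T 0 j)⁻¹ * (desc B.T 0 (m - 1))⁻¹ * (B.Y (m - 1))⁻¹ *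
        (B.Y m * B.Y m ^ ε) * desc B.T j m := by
  obtain ⟨r, rfl⟩ : ∃ r, m = r + 1 := ⟨m - 1, by lia⟩
  have hP : SemiconjBy B.P (desc B.T (j + 1) (r + 1)) (desc B.T j r) :=
    semiconjBy_succ_desc fun l _ hl => B.semiconjBy_P_T l (by lia)
  have hasc : Commute (desc B.T (j + 1) (r + 1)) (asc B.T 0 j) :=
    commute_asc fun l _ _ => (commute_desc fun p _ _ =>
      B.commute_T_T_of_far (by lia) (by lia) (by lia)).symm
  have hY : ∀ {g}, Commute (B.Y (r + 1)) g → Commute (B.Y (r + 1) * B.Y (r + 1) ^ ε) g :=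
    fun h => h.mul_left (h.zpow_left ε)
  calc _ = B.P * (desc B.T j (r + 1) * desc B.T 0 j)⁻¹ * B.Y (r + 1) ^ ε *
          (desc B.T (j + 1) (r + 1) * (asc B.T 0 j)⁻¹) * B.P⁻¹ := by
        rw [B.X_mul_D ε hjm.le, desc_eq_desc_succ_mul B.T hjm]; group
    _ = B.Y (r + 1) * B.Y (r + 1) ^ ε * (asc B.T 0 j)⁻¹ *
          (desc B.T (j + 1) (r + 1) * B.P⁻¹) := by
        rw [desc_mul_desc B.T j.zero_le hjm.le, ← B.Y_last, hasc.inv_right.eq]; group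
    _ = (asc B.T 0 j)⁻¹ * (B.Y (r + 1) * B.Y (r + 1) ^ ε * (B.T r * B.P)⁻¹) * B.T r *
          desc B.T j r := by
        rw [(hY (B.commute_Y_last_asc 0 hjm)).inv_right.eq, ← hP.inv_symm_left.eq]; group
    _ = _ := by
        have hYT := (hY (B.commute_Y_last_T_mul_P r.succ_pos)).inv_right
        rw [Nat.add_sub_cancel] at hYT ⊢
        have hYr : B.Y r * desc B.T 0 r = B.T r * B.P := B.Y_pred_mul_desc r.succ_pos
        rw [hYT.eq, ← hYr, desc_succ_right B.T (by lia), mul_inv_rev]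
        simp only [mul_assoc]

theorem isSkeinTriple_of_gt (hji : j < i) (hi : i ≤ m) :
    IsSkeinTriple (B.T j) (B.Y i * (B.X i * B.D ε j) * (B.J i)⁻¹ * (B.Y i)⁻¹)
      (B.Q * B.K i * (B.X i * B.D ε j))
      (asc B.T i m * (asc B.T 0 j)⁻¹ * (desc B.T 0 (m - 1))⁻¹ * (B.Y (m - 1))⁻¹ *
        (B.Y m * B.Y m ^ ε) * desc B.T j m * (asc B.T i m)⁻¹) := by
  have hYJ : B.Y i * B.J i = asc B.T i m * B.P * asc B.T 0 j * B.T j * asc B.T (j + 1) i := by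
    rw [Y_mul_J, ← asc_mul_asc B.T j.zero_le hji.le, asc_eq_mul_asc_succ B.T hji]
    simp only [mul_assoc]
  have hZ : SemiconjBy (asc B.T i m * B.P * asc B.T 0 j) (B.D ε (j + 1)) (B.D ε j) :=
    (SemiconjBy.mul_left (B.commute_asc_D ε le_rfl (by lia) (by lia))
      (B.semiconjBy_P_D ε (by lia))).mul_left (B.commute_asc_D ε (by lia) (by lia) (by lia))
  have hW : Commute (asc B.T (j + 1) i) (B.D ε j) := B.commute_asc_D ε hi (by lia) (by lia)
  refine ⟨B.Q * B.K i * B.X i * (asc B.T i m * B.P * asc B.T 0 j),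
    B.D ε (j + 1) * (asc B.T i m * B.P * asc B.T 0 j)⁻¹, ?_, ?_, ?_⟩
  · rw [B.Y_mul_X_mul_D_mul_J_inv ε hi, hYJ, mul_assoc _ (asc B.T (j + 1) i), hW.eq,
      ← B.T_mul_D_mul_T ε (by lia), pow_two]
    group
  · rw [← mul_inv_eq_of_eq_mul hZ.eq]
    group
  · have hT : B.T j * B.D ε (j + 1) = B.D ε j * (B.T j)⁻¹ :=
      eq_mul_inv_of_mul_eq (B.T_mul_D_mul_T ε (by lia))
    symm
    calc _ = B.Q * B.K i * B.X i * (asc B.T i m * B.P * asc B.T 0 j) *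
            (B.T j * B.D ε (j + 1)) * (asc B.T i m * B.P * asc B.T 0 j)⁻¹ := by group
      _ = asc B.T i m * (B.P * (desc B.T 0 j)⁻¹ * (B.X j * B.D ε j) * (B.T j)⁻¹ *
            (B.P * asc B.T 0 j)⁻¹) * (asc B.T i m)⁻¹ := by
          rw [B.K_mul_X_mul_asc_mul_P_mul_asc hi (by lia), hT]; group
      _ = _ := by
          rw [B.P_mul_desc_inv_mul_X_mul_D ε (by lia)]; simp only [mul_assoc]

theorem isSkeinTriple_inv_of_lt (hij : i < j) (hj : j ≤ m) :
    IsSkeinTriple (B.T (j - 1))⁻¹ (B.Y i * B.J i * (B.X j * B.D ε i) * (B.Y i)⁻¹)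
      (B.X j * B.D ε i * (B.K i)⁻¹ * B.Q⁻¹)
      ((desc B.T j m)⁻¹ * B.Y m ^ ε * asc B.T i (j - 1) * (asc B.T i m)⁻¹ * B.Q⁻¹) := by
  have h := ((B.dual ε).isSkeinTriple_of_lt (-ε) hij hj).unop
  rw [Y_dual, J_dual, K_dual, Y_dual, B.D_neg_dual ε hj] at h
  simpa [asc_dual, desc_dual, mul_assoc] using h

theorem isSkeinTriple_inv_of_gt (hji : j < i) (hi : i ≤ m) :
    IsSkeinTriple (B.T j)⁻¹ (B.Y i * B.J i * (B.X j * B.D ε i) * (B.Y i)⁻¹)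
      (B.X j * B.D ε i * (B.K i)⁻¹ * B.Q⁻¹)
      (asc B.T i m * (desc B.T j m)⁻¹ * B.Y (m - 1) * (B.Y m ^ ε * (B.Y m)⁻¹) *
        desc B.T 0 (m - 1) * asc B.T 0 j * (asc B.T i m)⁻¹) := by
  have hY : Commute (B.Y m ^ ε * (B.Y m)⁻¹) (B.Y (m - 1)) :=
    have h := B.commute_Y_last_Y m.pred_le
    (h.zpow_left ε).mul_left h.inv_left
  have h := ((B.dual ε).isSkeinTriple_of_gt (-ε) hji hi).unop
  rw [Y_dual, J_dual, K_dual, Y_dual, Y_dual, B.D_neg_dual ε (by lia)] at h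
  rw [mul_assoc (asc B.T i m * _), ← hY.eq]
  simpa [asc_dual, desc_dual, mul_assoc] using h

end DoubleAffineBraid

end Group

section Algebra

variable {A : Type*} [Ring A] [Algebra R A] {m : ℕ} {δ : R}

theorem inv_sq_eq_one_add_neg_smul {s : Aˣ} (hs : (s : A) ^ 2 = 1 + δ • (s : A)) :
    (↑s⁻¹ : A) ^ 2 = 1 + (-δ) • (↑s⁻¹ : A) := by
  have h := congrArg (fun x : A => ↑s⁻¹ * x * ↑s⁻¹) hs
  simp only [pow_two, mul_add, add_mul, Units.inv_mul_cancel_left, Units.mul_inv, mul_one,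
    mul_smul_comm, smul_mul_assoc, Units.inv_mul, one_mul] at h
  rw [pow_two, h]
  module

theorem IsSkeinTriple.coe_eq_add_smul {s a b c : Aˣ} (h : IsSkeinTriple s a b c)
    (hs : (s : A) ^ 2 = 1 + δ • (s : A)) : (a : A) = b + δ • (c : A) := by
  obtain ⟨g, h, rfl, rfl, rfl⟩ := h
  simp only [Units.val_mul, Units.val_pow_eq_pow_val, hs, mul_add, add_mul, mul_one,
    mul_smul_comm, smul_mul_assoc]

namespace DoubleAffineBraid

variable (B : DoubleAffineBraid Aˣ m)

/-- The relations `Q = q` and `(T_k - τ)(T_k + τ⁻¹) = 0`, with `δ = τ - τ⁻¹`, which turn the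
double affine braid group into the double affine Hecke algebra. -/
structure IsHecke (q : Rˣ) (δ : R) : Prop where
  Q_eq : (B.Q : A) = algebraMap R A q
  T_sq : ∀ k < m, (B.T k : A) ^ 2 = 1 + δ • (B.T k : A)

variable {B} {q : Rˣ}

theorem IsHecke.Q_mul (hB : B.IsHecke q δ) (a : A) : (B.Q : A) * a = q • a := by
  rw [hB.Q_eq, ← Algebra.smul_def, Units.smul_def]

theorem IsHecke.mul_Q_inv (hB : B.IsHecke q δ) (a : A) : a * (↑B.Q⁻¹ : A) = q⁻¹ • a := by
  rw [Units.mul_inv_eq_iff_eq_mul, hB.Q_eq, ← Algebra.commutes, ← Algebra.smul_def,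
    ← Units.smul_def, smul_inv_smul]

variable (B)

/-- The element `e_{ij} = X_i D_j` of the paper, with an arbitrary scalar `κ` in place of
`(q - q⁻¹)⁻¹`. -/
def e (κ : R) (i j : ℕ) : A := κ • (↑(B.X i * B.D 1 j) - ↑(B.X i * B.D (-1) j) : A)

theorem e_eq_mul (κ : R) (i j : ℕ) :
    B.e κ i j = ↑(B.X i) * (↑(asc B.T j m) *
      (κ • (↑(B.X m)⁻¹ * (↑(B.Y m) - ↑(B.Y m)⁻¹))) * ↑(desc B.T j m)) := by
  simp only [e, D, zpow_one, zpow_neg_one, Units.val_mul, mul_sub, sub_mul, mul_smul_comm,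
    smul_mul_assoc, mul_assoc]

variable {B} {i j k : ℕ} (κ : R)

theorem IsHecke.Y_mul_e_of_lt (hB : B.IsHecke q δ) (hij : i < j) (hj : j ≤ m) :
    (B.Y i : A) * B.e κ i j * ↑(B.J i)⁻¹ * ↑(B.Y i)⁻¹ =
      q • (↑(B.K i) * B.e κ i j) + (κ * δ) • q • (↑(asc B.T i m) * ↑(asc B.T i (j - 1))⁻¹ *
        (B.Y m - ↑(B.Y m)⁻¹ : A) * ↑(desc B.T j m)) := by
  have h (ε : ℤ) := (B.isSkeinTriple_of_lt ε hij hj).coe_eq_add_smul (hB.T_sq _ (by lia))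
  have hpos := h 1
  have hneg := h (-1)
  simp only [Units.val_mul, mul_assoc, hB.Q_mul, zpow_one, zpow_neg_one] at hpos hneg
  simp only [e, Units.val_mul, mul_assoc, mul_smul_comm, smul_mul_assoc, mul_sub, sub_mul,
    hpos, hneg, Units.smul_def]
  module

theorem IsHecke.Y_mul_e_of_gt (hB : B.IsHecke q δ) (hji : j < i) (hi : i ≤ m) :
    (B.Y i : A) * B.e κ i j * ↑(B.J i)⁻¹ * ↑(B.Y i)⁻¹ =
      q • (↑(B.K i) * B.e κ i j) + (κ * δ) • (↑(asc B.T i m) * ↑(asc B.T 0 j)⁻¹ *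
        ↑(desc B.T 0 (m - 1))⁻¹ * ↑(B.Y (m - 1))⁻¹ * ((B.Y m : A) ^ 2 - 1) *
        ↑(desc B.T j m) * ↑(asc B.T i m)⁻¹) := by
  have h (ε : ℤ) := (B.isSkeinTriple_of_gt ε hji hi).coe_eq_add_smul (hB.T_sq _ (by lia))
  have hpos := h 1
  have hneg := h (-1)
  rw [zpow_one, ← pow_two] at hpos
  rw [zpow_neg_one, mul_inv_cancel] at hneg
  simp only [Units.val_mul, Units.val_pow_eq_pow_val, mul_assoc, hB.Q_mul,
    one_mul] at hpos hneg
  simp only [e, Units.val_mul, mul_assoc, mul_smul_comm, smul_mul_assoc, mul_sub, sub_mul,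
    one_mul, hpos, hneg, Units.smul_def]
  module

theorem IsHecke.Y_mul_J_mul_e_of_lt (hB : B.IsHecke q δ) (hij : i < j) (hj : j ≤ m) :
    (B.Y i : A) * ↑(B.J i) * B.e κ j i * ↑(B.Y i)⁻¹ =
      q⁻¹ • (B.e κ j i * ↑(B.K i)⁻¹) + (κ * -δ) • q⁻¹ • (↑(desc B.T j m)⁻¹ *
        (B.Y m - ↑(B.Y m)⁻¹ : A) * ↑(asc B.T i (j - 1)) * ↑(asc B.T i m)⁻¹) := by
  have h (ε : ℤ) := (B.isSkeinTriple_inv_of_lt ε hij hj).coe_eq_add_smul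
    (inv_sq_eq_one_add_neg_smul (hB.T_sq _ (by lia)))
  have hpos := h 1
  have hneg := h (-1)
  rw [Units.val_mul _ B.Q⁻¹, Units.val_mul _ B.Q⁻¹, hB.mul_Q_inv, hB.mul_Q_inv] at hpos hneg
  simp only [Units.val_mul, mul_assoc, zpow_one, zpow_neg_one] at hpos hneg
  simp only [e, Units.val_mul, mul_assoc, mul_smul_comm, smul_mul_assoc, mul_sub, sub_mul,
    hpos, hneg, Units.smul_def]
  module

theorem IsHecke.Y_mul_J_mul_e_of_gt (hB : B.IsHecke q δ) (hji : j < i) (hi : i ≤ m) :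
    (B.Y i : A) * ↑(B.J i) * B.e κ j i * ↑(B.Y i)⁻¹ =
      q⁻¹ • (B.e κ j i * ↑(B.K i)⁻¹) + (κ * -δ) • (↑(asc B.T i m) * ↑(desc B.T j m)⁻¹ *
        ↑(B.Y (m - 1)) * (1 - (↑(B.Y m)⁻¹ : A) ^ 2) * ↑(desc B.T 0 (m - 1)) * ↑(asc B.T 0 j) *
        ↑(asc B.T i m)⁻¹) := by
  have h (ε : ℤ) := (B.isSkeinTriple_inv_of_gt ε hji hi).coe_eq_add_smul
    (inv_sq_eq_one_add_neg_smul (hB.T_sq _ (by lia)))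
  have hpos := h 1
  have hneg := h (-1)
  rw [Units.val_mul _ B.Q⁻¹, hB.mul_Q_inv] at hpos hneg
  rw [zpow_one, mul_inv_cancel] at hpos
  rw [zpow_neg_one, ← pow_two] at hneg
  simp only [Units.val_mul, Units.val_pow_eq_pow_val, mul_assoc,
    one_mul] at hpos hneg
  simp only [e, Units.val_mul, mul_assoc, mul_smul_comm, smul_mul_assoc, mul_sub, sub_mul,
    one_mul, hpos, hneg, Units.smul_def]
  module

theorem Y_mul_ℛ_mul_e (hi : i ≤ m) (hj : j ≤ m) (hk : k ≤ m) (hij : i ≠ j) (hjk : j ≠ k)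
    (hik : i ≠ k) :
    (B.Y i : A) * ↑(B.ℛ i j) * B.e κ j k * ↑(B.ℛ i k)⁻¹ * ↑(B.Y i)⁻¹ =
      ↑(B.ℛbar k i)⁻¹ * B.e κ j k * ↑(B.ℛbar j i) := by
  have h (ε : ℤ) := congrArg Units.val (B.Y_mul_ℛ_mul_X_mul_D ε hi hj hk hij hjk hik)
  simp only [Units.val_mul, mul_assoc] at h
  simp only [e, Units.val_mul, mul_assoc, mul_smul_comm, smul_mul_assoc, mul_sub, sub_mul, h]

end DoubleAffineBraid

end Algebra

section DemazureLusztig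

variable {L : Type*} [CommRing L] [Algebra R L] {t t' : R}

/-- `T` is the Demazure–Lusztig operator with parameters `t`, `t'` attached to the involution `s`
exchanging `x` and `y`. The division by `y - x` is cleared. -/
structure IsDemazureLusztig (t t' : R) (x y : L) (s : L →ₐ[R] L) (T : Module.End R L) :
    Prop where
  ne : x ≠ y
  map_left : s x = y
  map_right : s y = x
  involutive : Function.Involutive s
  sub_mul_apply : ∀ p, (y - x) * T p =
    (algebraMap R L t' * y - algebraMap R L t * x) * s p + algebraMap R L (t - t') * (y * p)

namespace IsDemazureLusztig

variable {x y z w : L} {s r : L →ₐ[R] L} {T S : Module.End R L}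

theorem sub_ne_zero (h : IsDemazureLusztig t t' x y s T) : y - x ≠ 0 :=
  _root_.sub_ne_zero.2 h.ne.symm

variable [IsDomain L]

theorem semiconjBy {x' y' u : L} {s' φ : L →ₐ[R] L} {T' : Module.End R L}
    (h : IsDemazureLusztig t t' x y s T) (h' : IsDemazureLusztig t t' x' y' s' T') (hu : u ≠ 0)
    (hx : φ x = u * x') (hy : φ y = u * y') (hs : ∀ p, φ (s p) = s' (φ p)) :
    SemiconjBy φ.toLinearMap T T' := by
  refine LinearMap.ext fun p => mul_left_cancel₀ (mul_ne_zero hu h'.sub_ne_zero) ?_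
  have h₁ := congrArg φ (h.sub_mul_apply p)
  have h₂ := h'.sub_mul_apply (φ p)
  simp only [map_mul, map_add, map_sub, hx, hy, hs, AlgHom.commutes] at h₁ h₂
  simp only [Module.End.mul_apply, AlgHom.toLinearMap_apply]
  linear_combination h₁ - u * h₂

theorem apply_mul_of_fixed (h : IsDemazureLusztig t t' x y s T) (hz : s z = z) (p : L) :
    T (z * p) = z * T p := by
  refine mul_left_cancel₀ h.sub_ne_zero ?_
  have h₁ := h.sub_mul_apply (z * p)
  rw [map_mul s, hz] at h₁
  linear_combination h₁ - z * h.sub_mul_apply p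

theorem add_smul_apply_right_mul (h : IsDemazureLusztig t t' x y s T) (p : L) :
    (T + (t' - t) • (1 : Module.End R L)) (y * p) = x * T p := by
  refine mul_left_cancel₀ h.sub_ne_zero ?_
  have h₁ := h.sub_mul_apply (y * p)
  simp only [map_mul s, h.map_right, map_sub] at h₁
  have h₂ := h.sub_mul_apply p
  simp only [map_sub] at h₂
  rw [LinearMap.add_apply, LinearMap.smul_apply, Module.End.one_apply, Algebra.smul_def, map_sub]
  linear_combination h₁ - x * h₂

theorem commute (hT : IsDemazureLusztig t t' x y s T) (hS : IsDemazureLusztig t t' z w r S)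
    (hsz : s z = z) (hsw : s w = w) (hrx : r x = x) (hry : r y = y)
    (hsr : ∀ p, s (r p) = r (s p)) : Commute T S := by
  refine LinearMap.ext fun p => mul_left_cancel₀ (mul_ne_zero hT.sub_ne_zero hS.sub_ne_zero) ?_
  have h₁ := congrArg s (hS.sub_mul_apply p)
  have h₂ := congrArg r (hT.sub_mul_apply p)
  simp only [map_mul, map_add, map_sub, hsz, hsw, hrx, hry, hsr, AlgHom.commutes] at h₁ h₂
  have h₃ := hT.sub_mul_apply (S p)
  have h₄ := hS.sub_mul_apply (T p)
  have h₅ := hT.sub_mul_apply p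
  have h₆ := hS.sub_mul_apply p
  simp only [map_sub] at h₃ h₄ h₅ h₆
  simp only [Module.End.mul_apply]
  set a := algebraMap R L t
  set b := algebraMap R L t'
  linear_combination (w - z) * h₃ - (y - x) * h₄ + (b * y - a * x) * h₁ + (a - b) * y * h₆
    - (b * w - a * z) * h₂ - (a - b) * w * h₅

-- The expansions of `T S T` and `S T S` over the words in `s` and `r` differ only in the longest
-- word, `s r s` against `r s r`, so the braid relation for `s` and `r` identifies them.
theorem apply_left_right_left (hT : IsDemazureLusztig t t' x y s T)
    (hS : IsDemazureLusztig t t' y z r S) (hsz : s z = z) (hrx : r x = x) {a b : L}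
    (ha : a = algebraMap R L t) (hb : b = algebraMap R L t') (p : L) :
    (y - x) * (z - y) * (z - x) * T (S (T p)) =
      (b * y - a * x) * (b * z - a * x) * (b * z - a * y) * s (r (s p))
        + (a - b) * z * (b * y - a * x) * (b * z - a * x) * s (r p)
        + (a - b) * y * (b * z - a * x) * (b * z - a * y) * r (s p)
        + (a - b) ^ 2 * z ^ 2 * (b * y - a * x) * s p
        + (a - b) ^ 2 * y * z * (b * z - a * y) * r p
        + (a - b) * z *
          ((a ^ 2 + b ^ 2) * y * z - a * b * (x * z + y * z + y ^ 2 - x * y)) * p := by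
  have hsa : s a = a := ha ▸ s.commutes t
  have hsb : s b = b := hb ▸ s.commutes t'
  have hra : r a = a := ha ▸ r.commutes t
  have hrb : r b = b := hb ▸ r.commutes t'
  refine mul_left_cancel₀ hT.sub_ne_zero ?_
  have h₁ := hT.sub_mul_apply p
  have h₂ := congrArg s h₁
  have h₃ := congrArg r h₁
  have h₄ := congrArg s h₃
  have h₅ := hS.sub_mul_apply (T p)
  have h₆ := congrArg s h₅
  have h₇ := hT.sub_mul_apply (S (T p))
  simp only [map_mul, map_add, map_sub, hT.map_left, hT.map_right, hsz, hrx, hS.map_left,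
    hT.involutive _, ← ha, ← hb, hsa, hsb, hra, hrb] at h₁ h₂ h₃ h₄ h₅ h₆ h₇
  linear_combination (y - x) * (z - y) * (z - x) * h₇
    + (y - x) * (z - y) * (b * y - a * x) * h₆
    + (y - x) * (z - x) * (a - b) * y * h₅
    + (y - x) * (b * y - a * x) * (b * z - a * x) * h₄
    + (y - x) * (a - b) * y * (b * z - a * y) * h₃
    - (z - y) * (b * y - a * x) * (a - b) * z * h₂
    + (z - x) * (a - b) ^ 2 * y * z * h₁

theorem apply_right_left_right (hT : IsDemazureLusztig t t' x y s T)
    (hS : IsDemazureLusztig t t' y z r S) (hsz : s z = z) (hrx : r x = x) {a b : L}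
    (ha : a = algebraMap R L t) (hb : b = algebraMap R L t') (p : L) :
    (y - x) * (z - y) * (z - x) * S (T (S p)) =
      (b * y - a * x) * (b * z - a * x) * (b * z - a * y) * r (s (r p))
        + (a - b) * z * (b * y - a * x) * (b * z - a * x) * s (r p)
        + (a - b) * y * (b * z - a * x) * (b * z - a * y) * r (s p)
        + (a - b) ^ 2 * z ^ 2 * (b * y - a * x) * s p
        + (a - b) ^ 2 * y * z * (b * z - a * y) * r p
        + (a - b) * z *
          ((a ^ 2 + b ^ 2) * y * z - a * b * (x * z + y * z + y ^ 2 - x * y)) * p := by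
  have hsa : s a = a := ha ▸ s.commutes t
  have hsb : s b = b := hb ▸ s.commutes t'
  have hra : r a = a := ha ▸ r.commutes t
  have hrb : r b = b := hb ▸ r.commutes t'
  refine mul_left_cancel₀ hS.sub_ne_zero ?_
  have h₁ := hS.sub_mul_apply p
  have h₂ := congrArg r h₁
  have h₃ := congrArg s h₁
  have h₄ := congrArg r h₃
  have h₅ := hT.sub_mul_apply (S p)
  have h₆ := congrArg r h₅
  have h₇ := hS.sub_mul_apply (T (S p))
  simp only [map_mul, map_add, map_sub, hT.map_right, hsz, hrx, hS.map_left, hS.map_right,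
    hS.involutive _, ← ha, ← hb, hsa, hsb, hra, hrb] at h₁ h₂ h₃ h₄ h₅ h₆ h₇
  linear_combination (y - x) * (z - y) * (z - x) * h₇
    + (y - x) * (z - y) * (b * z - a * y) * h₆
    + (z - y) * (z - x) * (a - b) * z * h₅
    + (z - y) * (b * z - a * y) * (b * z - a * x) * h₄
    + (z - y) * (a - b) * z * (b * y - a * x) * h₃
    - (y - x) * (b * z - a * y) * (a - b) * z * h₂
    + (z - x) * (a - b) ^ 2 * z * y * h₁

theorem braid (hT : IsDemazureLusztig t t' x y s T) (hS : IsDemazureLusztig t t' y z r S)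
    (hsz : s z = z) (hrx : r x = x) (hxz : x ≠ z) (hsrs : ∀ p, s (r (s p)) = r (s (r p))) :
    T * S * T = S * T * S := by
  have hΔ : (y - x) * (z - y) * (z - x) ≠ 0 :=
    mul_ne_zero (mul_ne_zero hT.sub_ne_zero hS.sub_ne_zero) (_root_.sub_ne_zero.2 hxz.symm)
  refine LinearMap.ext fun p => mul_left_cancel₀ hΔ ?_
  simp only [Module.End.mul_apply, hT.apply_left_right_left hS hsz hrx rfl rfl,
    hT.apply_right_left_right hS hsz hrx rfl rfl, hsrs]

end IsDemazureLusztig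

end DemazureLusztig

section Laurent

theorem mono_mul_mono (a b : Fin n →₀ ℤ) (r s : R) :
    mono a r * mono b s = mono (a + b) (r * s) :=
  AddMonoidAlgebra.single_mul_single ..

theorem Xel_mul_XinvEl (i : Fin n) : (Xel i : Laur R n) * XinvEl i = 1 := by
  rw [Xel, XinvEl, mono_mul_mono, ← Finsupp.single_add, mul_one, add_neg_cancel,
    Finsupp.single_zero]
  rfl

theorem Xel_injective [Nontrivial R] : Function.Injective (Xel : Fin n → Laur R n) := by
  intro i j h
  exact (Finsupp.single_left_inj one_ne_zero).1
    ((AddMonoidAlgebra.single_left_inj one_ne_zero).1 h)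

theorem linearMap_ext_mono {M : Type*} [AddCommMonoid M] [Module R M] {f g : Laur R n →ₗ[R] M}
    (h : ∀ a r, f (mono a r) = g (mono a r)) : f = g :=
  LinearMap.toAddMonoidHom_injective (AddMonoidAlgebra.addMonoidHom_ext h)

/-- The algebra endomorphism of the Laurent polynomial ring with `X_k ↦ c_k X_{w k}`. Both the
action of the symmetric group (`c = 1`) and the operator `π⁻¹` are of this form. -/
def monomialHom (c : Fin n → Rˣ) (w : Equiv.Perm (Fin n)) : Laur R n →ₐ[R] Laur R n :=
  AddMonoidAlgebra.lift R (Laur R n) (Fin n →₀ ℤ)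
    { toFun := fun a => mono (Finsupp.equivMapDomain w a.toAdd) ↑(∏ k, c k ^ a.toAdd k)
      map_one' := by
        simp only [toAdd_one, Finsupp.equivMapDomain_zero, Finsupp.coe_zero, Pi.zero_apply,
          zpow_zero, Finset.prod_const_one, Units.val_one]
        rfl
      map_mul' := fun a b => by
        have hw : Finsupp.equivMapDomain w (a.toAdd + b.toAdd) =
            Finsupp.equivMapDomain w a.toAdd + Finsupp.equivMapDomain w b.toAdd := by
          ext; simp
        simp only [mono_mul_mono, toAdd_mul, hw, Finsupp.add_apply, zpow_add,
          Finset.prod_mul_distrib, Units.val_mul] }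

theorem monomialHom_mono (c : Fin n → Rˣ) (w : Equiv.Perm (Fin n)) (a : Fin n →₀ ℤ) (r : R) :
    monomialHom c w (mono a r) =
      (↑(∏ k, c k ^ a k) : R) • (mono (Finsupp.equivMapDomain w a) r : Laur R n) := by
  rw [monomialHom, mono, AddMonoidAlgebra.lift_single]
  simp [mono, AddMonoidAlgebra.smul_single, mul_comm]

theorem monomialHom_Xel (c : Fin n → Rˣ) (w : Equiv.Perm (Fin n)) (k : Fin n) :
    monomialHom c w (Xel k) = algebraMap R _ (c k) * (Xel (w k) : Laur R n) := by
  have hprod : ∏ l, c l ^ (Finsupp.single k (1 : ℤ)) l = c k := by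
    rw [Finset.prod_eq_single_of_mem k (Finset.mem_univ k) fun l _ hl => by
      rw [Finsupp.single_eq_of_ne hl, zpow_zero], Finsupp.single_eq_same, zpow_one]
  rw [Xel, monomialHom_mono, Finsupp.equivMapDomain_single, hprod, Algebra.smul_def, Xel]

theorem monomialHom_mul (c d : Fin n → Rˣ) (v w : Equiv.Perm (Fin n)) :
    monomialHom c w * monomialHom d v = monomialHom (d * c ∘ v) (w * v) := by
  refine AlgHom.toLinearMap_injective (linearMap_ext_mono fun a r => ?_)
  have hc : ∏ k, c k ^ (Finsupp.equivMapDomain v a) k = ∏ k, c (v k) ^ a k :=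
    Fintype.prod_equiv v.symm _ _ fun k => by
      rw [Finsupp.equivMapDomain_apply, Equiv.apply_symm_apply]
  simp only [AlgHom.toLinearMap_apply, AlgHom.mul_apply, monomialHom_mono, map_smul, smul_smul, hc,
    ← Units.val_mul, ← Finset.prod_mul_distrib, ← mul_zpow, Pi.mul_apply, Function.comp_apply,
    ← Finsupp.equivMapDomain_trans]
  rfl

theorem monomialHom_semiconj_swap {c : Fin n → Rˣ} (w : Equiv.Perm (Fin n)) {i j : Fin n}
    (hc : c i = c j) (p : Laur R n) :
    monomialHom c w (monomialHom 1 (Equiv.swap i j) p) =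
      monomialHom 1 (Equiv.swap (w i) (w j)) (monomialHom c w p) := by
  have hcomp : c ∘ Equiv.swap i j = c := funext fun k => by
    simp only [Function.comp_apply, Equiv.swap_apply_def]
    split_ifs <;> simp_all
  rw [← AlgHom.mul_apply, ← AlgHom.mul_apply, monomialHom_mul, monomialHom_mul, hcomp,
    Equiv.mul_swap_eq_swap_mul, one_mul, Pi.one_comp, mul_one]

theorem monomialHom_swap_braid {i j k : Fin n} (hij : i ≠ j) (hik : i ≠ k) (hjk : j ≠ k)
    (p : Laur R n) :
    monomialHom 1 (Equiv.swap i j) (monomialHom 1 (Equiv.swap j k)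
        (monomialHom 1 (Equiv.swap i j) p)) =
      monomialHom 1 (Equiv.swap j k) (monomialHom 1 (Equiv.swap i j)
        (monomialHom 1 (Equiv.swap j k) p)) := by
  have hbraid : Equiv.swap i j * (Equiv.swap j k * Equiv.swap i j) =
      Equiv.swap j k * (Equiv.swap i j * Equiv.swap j k) := by
    rw [← mul_assoc, ← mul_assoc, Equiv.swap_mul_swap_mul_swap hij hik, Equiv.swap_comm i j,
      Equiv.swap_comm j k, Equiv.swap_mul_swap_mul_swap hjk.symm hik.symm, Equiv.swap_comm]
  simp only [← AlgHom.mul_apply, monomialHom_mul, Pi.one_comp, mul_one, hbraid]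

theorem monomialHom_one_Xel (w : Equiv.Perm (Fin n)) (k : Fin n) :
    monomialHom 1 w (Xel k) = (Xel (w k) : Laur R n) := by
  rw [monomialHom_Xel, Pi.one_apply, Units.val_one, map_one, one_mul]

theorem monomialHom_one_mono (w : Equiv.Perm (Fin n)) (a : Fin n →₀ ℤ) (r : R) :
    monomialHom 1 w (mono a r) = (mono (Finsupp.equivMapDomain w a) r : Laur R n) := by
  simp only [monomialHom_mono, Pi.one_apply, one_zpow, Finset.prod_const_one, Units.val_one,
    one_smul]

theorem monomialHom_one_one : monomialHom 1 1 = (1 : Laur R n →ₐ[R] Laur R n) :=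
  AlgHom.toLinearMap_injective <| linearMap_ext_mono fun a r =>
    (monomialHom_one_mono 1 a r).trans (congrArg (mono · r) (Finsupp.equivMapDomain_refl a))

/-- The operator `π⁻¹`, which is the algebra endomorphism with `X_{k+1} ↦ X_k` and
`X_0 ↦ q X_m`. -/
def piInvHom {m : ℕ} (q : Rˣ) : Laur R (m + 1) →ₐ[R] Laur R (m + 1) :=
  monomialHom (Pi.mulSingle 0 q) (finRotate (m + 1)).symm

theorem piInvHom_mul_monomialHom {m : ℕ} (q : Rˣ) :
    piInvHom q * monomialHom (Pi.mulSingle 0 q ∘ finRotate (m + 1))⁻¹ (finRotate (m + 1)) =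
      (1 : Laur R (m + 1) →ₐ[R] _) := by
  rw [piInvHom, monomialHom_mul, inv_mul_cancel, ← monomialHom_one_one]
  exact congrArg (monomialHom 1) (Equiv.self_trans_symm _)

theorem monomialHom_mul_piInvHom {m : ℕ} (q : Rˣ) :
    monomialHom (Pi.mulSingle 0 q ∘ finRotate (m + 1))⁻¹ (finRotate (m + 1)) * piInvHom q =
      (1 : Laur R (m + 1) →ₐ[R] _) := by
  have hc : Pi.mulSingle 0 q *
      (Pi.mulSingle 0 q ∘ finRotate (m + 1))⁻¹ ∘ (finRotate (m + 1)).symm = 1 :=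
    funext fun k => by simp
  rw [piInvHom, monomialHom_mul, hc, ← monomialHom_one_one]
  exact congrArg (monomialHom 1) (Equiv.symm_trans_self _)

/-- The operator `π⁻¹` as a unit. -/
def piInvUnit {m : ℕ} (q : Rˣ) : (Module.End R (Laur R (m + 1)))ˣ where
  val := (piInvHom q).toLinearMap
  inv := (monomialHom (Pi.mulSingle 0 q ∘ finRotate (m + 1))⁻¹ (finRotate (m + 1))).toLinearMap
  val_inv := congrArg AlgHom.toLinearMap (piInvHom_mul_monomialHom q)
  inv_val := congrArg AlgHom.toLinearMap (monomialHom_mul_piInvHom q)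

theorem finRotate_symm_succ {m k : ℕ} (hk : k < m) :
    (finRotate (m + 1)).symm ⟨k + 1, Nat.succ_lt_succ hk⟩ = ⟨k, Nat.lt_succ_of_lt hk⟩ :=
  (Equiv.symm_apply_eq _).2 (finRotate_of_lt hk).symm

theorem finRotate_symm_zero (m : ℕ) : (finRotate (m + 1)).symm 0 = Fin.last m :=
  (Equiv.symm_apply_eq _).2 finRotate_last.symm

theorem piInvHom_mono {m : ℕ} (q : Rˣ) (a : Fin (m + 1) →₀ ℤ) (r : R) :
    piInvHom q (mono a r) = (↑(q ^ a 0) : R) •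
      (mono (Finsupp.equivMapDomain (finRotate (m + 1)).symm a) r : Laur R (m + 1)) := by
  rw [piInvHom, monomialHom_mono, Finset.prod_eq_single_of_mem 0 (Finset.mem_univ 0) fun k _ hk =>
    by rw [Pi.mulSingle_eq_of_ne hk, one_zpow], Pi.mulSingle_eq_same]

theorem piInvHom_Xel_succ {m k : ℕ} (q : Rˣ) (hk : k < m) :
    piInvHom q (Xel ⟨k + 1, Nat.succ_lt_succ hk⟩) =
      (Xel ⟨k, Nat.lt_succ_of_lt hk⟩ : Laur R (m + 1)) := by
  rw [piInvHom, monomialHom_Xel, finRotate_symm_succ hk,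
    Pi.mulSingle_eq_of_ne (Fin.ne_of_val_ne k.succ_ne_zero), Units.val_one, map_one, one_mul]

theorem piInvHom_Xel_zero {m : ℕ} (q : Rˣ) :
    piInvHom q (Xel 0) = algebraMap R _ q * (Xel (Fin.last m) : Laur R (m + 1)) := by
  rw [piInvHom, monomialHom_Xel, finRotate_symm_zero, Pi.mulSingle_eq_same]

end Laurent

section PolynomialRepresentation

theorem XOp_mul_XinvOp (k : ℕ) : (XOp k * XinvOp k : Module.End R (Laur R n)) = 1 := by
  rw [XOp, XinvOp]
  split_ifs with h
  · exact LinearMap.ext fun p => (mul_assoc ..).symm.trans (by rw [Xel_mul_XinvEl, one_mul]; rfl)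
  · exact one_mul 1

theorem XinvOp_mul_XOp (k : ℕ) : (XinvOp k * XOp k : Module.End R (Laur R n)) = 1 := by
  rw [← XOp_mul_XinvOp k, XOp, XinvOp]
  split_ifs with h
  · exact LinearMap.ext fun p => mul_left_comm ..
  · rfl

theorem XOp_apply {k : ℕ} (hk : k < n) (p : Laur R n) : XOp k p = Xel ⟨k, hk⟩ * p := by
  rw [XOp, dif_pos hk]
  rfl

/-- `T` is the Demazure–Lusztig operator of the polynomial representation which exchanges `X_i`
and `X_j`. -/
abbrev IsSwapDemazureLusztig (t t' : R) (i j : Fin n) (T : Module.End R (Laur R n)) : Prop :=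
  IsDemazureLusztig t t' (Xel i) (Xel j) (monomialHom 1 (Equiv.swap i j)) T

theorem isSwapDemazureLusztig_of_sub_mul [Nontrivial R] {t t' : R} {i j : Fin n} (hij : i ≠ j)
    {T : Module.End R (Laur R n)}
    (h : ∀ p, (Xel j - Xel i) * T p =
      (t' • Xel j - t • Xel i) * monomialHom 1 (Equiv.swap i j) p + (t - t') • (Xel j * p)) :
    IsSwapDemazureLusztig t t' i j T where
  ne := Xel_injective.ne hij
  map_left := by rw [monomialHom_one_Xel, Equiv.swap_apply_left]
  map_right := by rw [monomialHom_one_Xel, Equiv.swap_apply_right]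
  involutive p := by
    rw [← AlgHom.mul_apply, monomialHom_mul, Equiv.swap_mul_self, Pi.one_comp, mul_one,
      monomialHom_one_one, AlgHom.one_apply]
  sub_mul_apply p := by simpa only [Algebra.smul_def] using h p

namespace IsSwapDemazureLusztig

variable [IsDomain R] {t t' : R} {i j k l : Fin n} {T S : Module.End R (Laur R n)}

theorem semiconjBy_monomialHom {w : Equiv.Perm (Fin n)} {c : Fin n → Rˣ}
    (hT : IsSwapDemazureLusztig t t' i j T) (hS : IsSwapDemazureLusztig t t' (w i) (w j) S)
    (hc : c i = c j) : SemiconjBy (monomialHom c w).toLinearMap T S :=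
  IsDemazureLusztig.semiconjBy hT hS
    ((map_ne_zero_iff _ (FaithfulSMul.algebraMap_injective R _)).2 (c i).ne_zero)
    (monomialHom_Xel c w i) (hc ▸ monomialHom_Xel c w j) (monomialHom_semiconj_swap w hc)

theorem apply_Xel_mul_of_ne (hT : IsSwapDemazureLusztig t t' i j T) (hi : k ≠ i) (hj : k ≠ j)
    (p : Laur R n) : T (Xel k * p) = Xel k * T p :=
  hT.apply_mul_of_fixed (by rw [monomialHom_one_Xel, Equiv.swap_apply_of_ne_of_ne hi hj]) p

theorem commute (hT : IsSwapDemazureLusztig t t' i j T) (hS : IsSwapDemazureLusztig t t' k l S)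
    (hik : i ≠ k) (hil : i ≠ l) (hjk : j ≠ k) (hjl : j ≠ l) : Commute T S := by
  refine IsDemazureLusztig.commute hT hS ?_ ?_ ?_ ?_ fun p => ?_
  · rw [monomialHom_one_Xel, Equiv.swap_apply_of_ne_of_ne hik.symm hjk.symm]
  · rw [monomialHom_one_Xel, Equiv.swap_apply_of_ne_of_ne hil.symm hjl.symm]
  · rw [monomialHom_one_Xel, Equiv.swap_apply_of_ne_of_ne hik hil]
  · rw [monomialHom_one_Xel, Equiv.swap_apply_of_ne_of_ne hjk hjl]
  · rw [monomialHom_semiconj_swap (i := k) (j := l) _ rfl,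
      Equiv.swap_apply_of_ne_of_ne hik.symm hjk.symm,
      Equiv.swap_apply_of_ne_of_ne hil.symm hjl.symm]

theorem braid (hT : IsSwapDemazureLusztig t t' i j T) (hS : IsSwapDemazureLusztig t t' j k S)
    (hij : i ≠ j) (hik : i ≠ k) (hjk : j ≠ k) : T * S * T = S * T * S :=
  IsDemazureLusztig.braid hT hS
    (by rw [monomialHom_one_Xel, Equiv.swap_apply_of_ne_of_ne hik.symm hjk.symm])
    (by rw [monomialHom_one_Xel, Equiv.swap_apply_of_ne_of_ne hij hik])
    (Xel_injective.ne hik) (monomialHom_swap_braid hij hik hjk)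

end IsSwapDemazureLusztig

variable [IsDomain R] {m : ℕ}

theorem semiconjBy_piInvHom {q : Rˣ} {t t' : R} {k : ℕ} (hk : k + 1 < m)
    {T S : Module.End R (Laur R (m + 1))}
    (hT : IsSwapDemazureLusztig t t' ⟨k + 1, by lia⟩ ⟨k + 2, by lia⟩ T)
    (hS : IsSwapDemazureLusztig t t' ⟨k, by lia⟩ ⟨k + 1, by lia⟩ S) :
    SemiconjBy (piInvHom q).toLinearMap T S := by
  refine hT.semiconjBy_monomialHom ?_ rfl
  rwa [finRotate_symm_succ (k := k) (by lia), finRotate_symm_succ (k := k + 1) hk]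

theorem semiconjBy_piInvHom_sq {q : Rˣ} {t t' : R} (hm : 0 < m)
    {T S : Module.End R (Laur R (m + 1))}
    (hT : IsSwapDemazureLusztig t t' ⟨0, by lia⟩ ⟨1, by lia⟩ T)
    (hS : IsSwapDemazureLusztig t t' ⟨m - 1, by lia⟩ ⟨m - 1 + 1, by lia⟩ S) :
    SemiconjBy ((piInvHom q).toLinearMap * (piInvHom q).toLinearMap) T S := by
  obtain ⟨m, rfl⟩ := Nat.exists_eq_succ_of_ne_zero hm.ne'
  have hsq : (piInvHom q).toLinearMap * (piInvHom q).toLinearMap =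
      (piInvHom q * piInvHom q : Laur R (m + 1 + 1) →ₐ[R] _).toLinearMap := rfl
  rw [hsq, piInvHom, monomialHom_mul]
  have h₀ : (finRotate (m + 1 + 1)).symm ⟨0, by lia⟩ = ⟨m + 1, by lia⟩ := finRotate_symm_zero _
  have h₁ : (finRotate (m + 1 + 1)).symm ⟨1, by lia⟩ = ⟨0, by lia⟩ := finRotate_symm_succ hm
  have hlast : (finRotate (m + 1 + 1)).symm ⟨m + 1, by lia⟩ = ⟨m, by lia⟩ :=
    finRotate_symm_succ m.lt_succ_self
  refine hT.semiconjBy_monomialHom ?_ ?_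
  · rw [Equiv.Perm.mul_apply, Equiv.Perm.mul_apply, h₀, h₁, hlast, h₀]
    exact hS
  · rw [Pi.mul_apply, Pi.mul_apply, Function.comp_apply, Function.comp_apply, h₀, h₁,
      Pi.mulSingle_eq_of_ne (i' := ⟨m + 1, by lia⟩) (Fin.ne_of_val_ne m.succ_ne_zero),
      Pi.mulSingle_eq_of_ne (i' := ⟨1, by lia⟩) (Fin.ne_of_val_ne one_ne_zero), mul_comm]

/-- The polynomial representation, restricted to the double affine braid group. -/
def polynomialRepresentation (q τ : Rˣ) (T : ℕ → (Module.End R (Laur R (m + 1)))ˣ)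
    (hT : ∀ k (hk : k < m),
      IsSwapDemazureLusztig (τ : R) ↑τ⁻¹ ⟨k, by lia⟩ ⟨k + 1, by lia⟩ (T k).val)
    (hTinv : ∀ k < m, (T k)⁻¹.val = (T k).val + (↑τ⁻¹ - ↑τ : R) • 1) :
    DoubleAffineBraid (Module.End R (Laur R (m + 1)))ˣ m where
  T := T
  X k := ⟨XOp k, XinvOp k, XOp_mul_XinvOp k, XinvOp_mul_XOp k⟩
  P := piInvUnit q
  Q := Units.map (algebraMap R (Module.End R (Laur R (m + 1)))) q
  commute_T_T k l hkl hl := Units.ext <| (hT k (by lia)).commute (hT l hl)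
    (by simp; lia) (by simp; lia) (by simp; lia) (by simp; lia)
  braid k hk := Units.ext <|
    (hT k (by lia)).braid (hT (k + 1) hk) (by simp) (by simp; lia) (by simp)
  commute_T_X k l hk hl hkl hkl' := Units.ext <| LinearMap.ext fun p => by
    simp only [Units.val_mul, Module.End.mul_apply, XOp_apply (Nat.lt_succ_of_le hl)]
    exact (hT k hk).apply_Xel_mul_of_ne (by simpa using hkl) (by simpa using hkl') p
  T_mul_X_mul_T k hk := by
    rw [mul_assoc, ← eq_inv_mul_iff_mul_eq]
    refine Units.ext <| LinearMap.ext fun p => ?_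
    simpa only [Units.val_mul, Module.End.mul_apply, XOp_apply (show k < m + 1 by lia),
      XOp_apply (show k + 1 < m + 1 by lia), hTinv k hk] using
      ((hT k hk).add_smul_apply_right_mul p).symm
  semiconjBy_P_X k hk := Units.ext <| LinearMap.ext fun p => by
    simp only [Units.val_mul, Module.End.mul_apply, XOp_apply (show k < m + 1 by lia),
      XOp_apply (show k + 1 < m + 1 by lia), piInvUnit, AlgHom.toLinearMap_apply, map_mul,
      piInvHom_Xel_succ q hk]
  P_mul_X_zero := Units.ext <| LinearMap.ext fun p => by
    simp only [Units.val_mul, Module.End.mul_apply, XOp_apply (show 0 < m + 1 by lia),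
      XOp_apply (show m < m + 1 by lia), piInvUnit, AlgHom.toLinearMap_apply, map_mul,
      Units.coe_map]
    exact (congrArg (· * _) (piInvHom_Xel_zero q)).trans
      ((mul_assoc ..).trans (Algebra.smul_def ..).symm)
  semiconjBy_P_T k hk := Units.ext (semiconjBy_piInvHom hk (hT (k + 1) hk) (hT k (by lia)))
  semiconjBy_P_sq_T hm := Units.ext (semiconjBy_piInvHom_sq hm (hT 0 hm) (hT (m - 1) (by lia)))
  commute_Q g := Units.ext <| Algebra.commutes _ _

theorem isHecke_polynomialRepresentation (q τ : Rˣ)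
    {T : ℕ → (Module.End R (Laur R (m + 1)))ˣ}
    (hT : ∀ k (hk : k < m),
      IsSwapDemazureLusztig (τ : R) ↑τ⁻¹ ⟨k, by lia⟩ ⟨k + 1, by lia⟩ (T k).val)
    (hTinv : ∀ k < m, (T k)⁻¹.val = (T k).val + (↑τ⁻¹ - ↑τ : R) • 1) :
    (polynomialRepresentation q τ T hT hTinv).IsHecke q (τ - ↑τ⁻¹ : R) where
  Q_eq := rfl
  T_sq k hk := by
    have h : (T k).val * ((T k).val + (↑τ⁻¹ - ↑τ : R) • 1) = 1 := hTinv k hk ▸ (T k).mul_inv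
    rw [mul_add, mul_smul_comm, mul_one] at h
    change (T k).val ^ 2 = 1 + _ • (T k).val
    rw [← h, pow_two]
    module

end PolynomialRepresentation

section Realization

namespace DoubleAffineBraid

variable {A : Type*} [Ring A] [Algebra R A] {m : ℕ} {B : DoubleAffineBraid Aˣ m}

/-- `T`, `Ti`, `Y`, `Yi` and `e` are the families `T_k`, `T_k⁻¹`, `Y_i`, `Y_i⁻¹` and `e_{ij}` of
`B`, wherever the indices are in range. -/
structure IsRealizedBy (B : DoubleAffineBraid Aˣ m) (κ : R) (T Ti Y Yi : ℕ → A)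
    (e : ℕ → ℕ → A) : Prop where
  T_eq : ∀ k < m, T k = B.T k
  Ti_eq : ∀ k < m, Ti k = (B.T⁻¹ k).val
  Y_eq : ∀ i ≤ m, Y i = B.Y i
  Yi_eq : ∀ i ≤ m, Yi i = (B.Y i)⁻¹.val
  e_eq : ∀ i, ∀ j ≤ m, e i j = B.e κ i j

namespace IsRealizedBy

variable {κ δ : R} {q : Rˣ} {T Ti Y Yi : ℕ → A} {e : ℕ → ℕ → A} {i j k : ℕ}

theorem Y_mul_e (h : B.IsRealizedBy κ T Ti Y Yi e) (hB : B.IsHecke q δ) (hi : i ≤ m) (hj : j ≤ m)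
    (hij : i ≠ j) :
    Y i * e i j * dF Ti 0 i * aF Ti 0 i * Yi i =
      (q : R) • (aF T i (m - i) * dF T i (m - i) * e i j) + (κ * δ) •
        (if i < j then
          (q : R) • (aF T i (m - i) * dF Ti i (j - i - 1) * (Y m - Yi m) * dF T j (m - j))
        else
          aF T i (m - i) * dF Ti 0 j * aF Ti 0 (m - 1) * Yi (m - 1) * (Y m ^ 2 - 1) *
            dF T j (m - j) * dF Ti i (m - i)) := by
  rcases hij.lt_or_gt with hij | hji
  · rw [if_pos hij]
    simp (disch := lia) only [coe_aF h.T_eq, coe_dF h.T_eq, coe_aF_inv h.Ti_eq,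
      coe_dF_inv h.Ti_eq, h.Y_eq, h.Yi_eq, h.e_eq]
    simpa only [asc, desc, J, K, mul_inv_rev, Units.val_mul, Units.smul_def, mul_assoc,
      Nat.sub_zero, Nat.sub_right_comm] using hB.Y_mul_e_of_lt κ hij hj
  · rw [if_neg hji.not_gt]
    simp (disch := lia) only [coe_aF h.T_eq, coe_dF h.T_eq, coe_aF_inv h.Ti_eq,
      coe_dF_inv h.Ti_eq, h.Y_eq, h.Yi_eq, h.e_eq]
    simpa only [asc, desc, J, K, mul_inv_rev, Units.val_mul, Units.smul_def, mul_assoc,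
      Nat.sub_zero] using hB.Y_mul_e_of_gt κ hji hi

theorem Y_mul_J_mul_e (h : B.IsRealizedBy κ T Ti Y Yi e) (hB : B.IsHecke q δ) (hi : i ≤ m)
    (hj : j ≤ m) (hij : i ≠ j) :
    Y i * dF T 0 i * aF T 0 i * e j i * Yi i =
      (↑q⁻¹ : R) • (e j i * aF Ti i (m - i) * dF Ti i (m - i)) + (κ * -δ) •
        (if i < j then
          (↑q⁻¹ : R) • (aF Ti j (m - j) * (Y m - Yi m) * aF T i (j - i - 1) * dF Ti i (m - i))
        else
          aF T i (m - i) * aF Ti j (m - j) * Y (m - 1) * (1 - Yi m ^ 2) * dF T 0 (m - 1) *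
            aF T 0 j * dF Ti i (m - i)) := by
  rcases hij.lt_or_gt with hij | hji
  · rw [if_pos hij]
    simp (disch := lia) only [coe_aF h.T_eq, coe_dF h.T_eq, coe_aF_inv h.Ti_eq,
      coe_dF_inv h.Ti_eq, h.Y_eq, h.Yi_eq, h.e_eq]
    simpa only [asc, desc, J, K, mul_inv_rev, Units.val_mul, Units.smul_def, mul_assoc,
      Nat.sub_zero, Nat.sub_right_comm] using hB.Y_mul_J_mul_e_of_lt κ hij hj
  · rw [if_neg hji.not_gt]
    simp (disch := lia) only [coe_aF h.T_eq, coe_dF h.T_eq, coe_aF_inv h.Ti_eq,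
      coe_dF_inv h.Ti_eq, h.Y_eq, h.Yi_eq, h.e_eq]
    simpa only [asc, desc, J, K, mul_inv_rev, Units.val_mul, Units.smul_def, mul_assoc,
      Nat.sub_zero] using hB.Y_mul_J_mul_e_of_gt κ hji hi

theorem Y_mul_Rgen_mul_e (h : B.IsRealizedBy κ T Ti Y Yi e) (hi : i ≤ m) (hj : j ≤ m)
    (hk : k ≤ m) (hij : i ≠ j) (hjk : j ≠ k) (hik : i ≠ k) :
    Y i * Rgen T Ti (T j ^ 2) i j * e j k * Rgen T Ti (Ti k ^ 2) i k * Yi i =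
      Rgen Ti T (T i ^ 2) k i * e j k * Rgen Ti T (Ti i ^ 2) j i := by
  have hT_sq {l : ℕ} (hl : l < m) : T l ^ 2 = (B.T l ^ 2 : Aˣ) := by
    rw [h.T_eq l hl, Units.val_pow_eq_pow_val]
  have hTi_sq {l : ℕ} (hl : l < m) : Ti l ^ 2 = (B.T⁻¹ l ^ 2 : Aˣ) := by
    rw [h.Ti_eq l hl, Units.val_pow_eq_pow_val]
  have hij' : Rgen T Ti (T j ^ 2) i j = B.ℛ i j :=
    coe_Rgen h.T_eq h.Ti_eq (fun hji => hT_sq (by lia)) hi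
  have hik' : Rgen T Ti (Ti k ^ 2) i k = (B.ℛ i k)⁻¹.val := by
    rw [ℛ, ← Rgen_inv_sq]
    exact coe_Rgen h.T_eq h.Ti_eq (fun hki => hTi_sq (by lia)) hi
  have hki' : Rgen Ti T (T i ^ 2) k i = (B.ℛbar k i)⁻¹.val := by
    rw [ℛbar, ← Rgen_inv_sq, inv_inv]
    exact coe_Rgen h.Ti_eq h.T_eq (fun hik => hT_sq (by lia)) hk
  have hji' : Rgen Ti T (Ti i ^ 2) j i = B.ℛbar j i := by
    rw [ℛbar, pureBraid, inv_inv]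
    exact coe_Rgen h.Ti_eq h.T_eq (fun hij => hTi_sq (by lia)) hj
  rw [hij', hik', hki', hji', h.Y_eq i hi, h.Yi_eq i hi, h.e_eq j k hk]
  exact Y_mul_ℛ_mul_e κ hi hj hk hij hjk hik

end IsRealizedBy

end DoubleAffineBraid

end Realization

section PolynomialFamilies

theorem exists_isHecke_isRealizedBy [IsDomain R] {m : ℕ} (q τ : Rˣ) (κ : R)
    {T Ti Y Yi D : ℕ → Module.End R (Laur R (m + 1))} {piInv : Module.End R (Laur R (m + 1))}
    {e : ℕ → ℕ → Module.End R (Laur R (m + 1))}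
    (hT : ∀ k (hk : k < m),
      IsSwapDemazureLusztig (τ : R) ↑τ⁻¹ ⟨k, by lia⟩ ⟨k + 1, by lia⟩ (T k))
    (hTi : ∀ k, Ti k = T k + (↑τ⁻¹ - τ : R) • 1)
    (hTinv : ∀ k < m, T k * Ti k = 1 ∧ Ti k * T k = 1)
    (hpiInv : piInv = (piInvHom q).toLinearMap)
    (hY : ∀ i, Y i = aF T i (m - i) * piInv * aF Ti 0 i)
    (hYinv : ∀ i ≤ m, Yi i * Y i = 1)
    (hD : ∀ i, D i =
      aF T i (m - i) * (κ • (XinvOp m * (Y m - Yi m))) * dF T i (m - i))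
    (he : ∀ i j, e i j = XOp i * D j) :
    ∃ B : DoubleAffineBraid (Module.End R (Laur R (m + 1)))ˣ m,
      B.IsHecke q (τ - ↑τ⁻¹ : R) ∧ B.IsRealizedBy κ T Ti Y Yi e := by
  have hTunit (k : ℕ) (hk : k < m) : ∃ u : (Module.End R (Laur R (m + 1)))ˣ, T k = u :=
    ⟨⟨T k, Ti k, (hTinv k hk).1, (hTinv k hk).2⟩, rfl⟩
  choose! u hu using hTunit
  have hui (k : ℕ) (hk : k < m) : Ti k = (u⁻¹ k).val :=
    Units.eq_inv_of_mul_eq_one_right (hu k hk ▸ (hTinv k hk).2)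
  let B := polynomialRepresentation q τ u (fun k hk => hu k hk ▸ hT k hk) fun k hk =>
    (hui k hk).symm.trans (hu k hk ▸ hTi k)
  have hYB (i : ℕ) (hi : i ≤ m) : Y i = (B.Y i).val := by
    rw [hY, coe_aF hu (by lia), coe_aF_inv hui (by lia), hpiInv]
    rfl
  have hYiB (i : ℕ) (hi : i ≤ m) : Yi i = (B.Y i)⁻¹.val :=
    Units.eq_inv_of_mul_eq_one_right (hYB i hi ▸ hYinv i hi)
  refine ⟨B, isHecke_polynomialRepresentation .., hu, hui, hYB, hYiB, fun i j hj => ?_⟩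
  rw [he, hD, B.e_eq_mul, hYB _ le_rfl, hYiB _ le_rfl, coe_aF hu (by lia), coe_dF hu (by lia)]
  rfl

end PolynomialFamilies

theorem statement10_general
    {R : Type*} [CommRing R] [IsDomain R] (n : ℕ) [NeZero n] (q τ : Rˣ) (κ : R)
    (W : Equiv.Perm (Fin n) → Module.End R (Laur R n))
    (hW : ∀ (w : Equiv.Perm (Fin n)) (a : Fin n →₀ ℤ) (r : R),
      W w (mono a r) = mono (Finsupp.equivMapDomain w a) r)
    (T Ti : ℕ → Module.End R (Laur R n))
    (hT : ∀ (k : ℕ) (hk : k + 1 < n) (p : Laur R n),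
      (Xel ⟨k + 1, hk⟩ - Xel ⟨k, Nat.lt_of_succ_lt hk⟩) * T k p
        = ((↑τ⁻¹ : R) • Xel ⟨k + 1, hk⟩ - (τ : R) • Xel ⟨k, Nat.lt_of_succ_lt hk⟩)
            * W (Equiv.swap ⟨k, Nat.lt_of_succ_lt hk⟩ ⟨k + 1, hk⟩) p
          + (τ - ↑τ⁻¹ : R) • (Xel ⟨k + 1, hk⟩ * p))
    (hTi : ∀ k, Ti k = T k + (↑τ⁻¹ - τ : R) • (1 : Module.End R (Laur R n)))
    (hTinv : ∀ k, k + 1 < n → T k * Ti k = 1 ∧ Ti k * T k = 1)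
    (piInv : Module.End R (Laur R n))
    (hpiInv : ∀ (a : Fin n →₀ ℤ) (r : R),
      piInv (mono a r)
        = (↑(q ^ a 0) : R) • mono (Finsupp.equivMapDomain (finRotate n).symm a) r)
    (Y Yi : ℕ → Module.End R (Laur R n))
    (hY : ∀ i, Y i = aF T i (n - 1 - i) * piInv * aF Ti 0 i)
    (hYinv : ∀ i, i < n → Y i * Yi i = 1 ∧ Yi i * Y i = 1)
    (D : ℕ → Module.End R (Laur R n))
    (hD : ∀ i, D i = aF T i (n - 1 - i)
        * (κ • (XinvOp (n - 1) * (Y (n - 1) - Yi (n - 1))))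
        * dF T i (n - 1 - i))
    (e : ℕ → ℕ → Module.End R (Laur R n))
    (he : ∀ i j, e i j = XOp i * D j) :
    (∀ i j : ℕ, i < n → j < n → i ≠ j →
      Y i * e i j * dF Ti 0 i * aF Ti 0 i * Yi i
        = (q : R) • (aF T i (n - 1 - i) * dF T i (n - 1 - i) * e i j)
          + (κ * (τ - ↑τ⁻¹)) •
            (if i < j then
              (q : R) • (aF T i (n - 1 - i) * dF Ti i (j - i - 1) * (Y (n - 1) - Yi (n - 1))
                    * dF T j (n - 1 - j))
             else
              aF T i (n - 1 - i) * dF Ti 0 j * aF Ti 0 (n - 2) * Yi (n - 2)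
                * (Y (n - 1) ^ 2 - 1) * dF T j (n - 1 - j) * dF Ti i (n - 1 - i))) ∧
    (∀ i j : ℕ, i < n → j < n → i ≠ j →
      Y i * dF T 0 i * aF T 0 i * e j i * Yi i
        = (↑q⁻¹ : R) • (e j i * aF Ti i (n - 1 - i) * dF Ti i (n - 1 - i))
          + (κ * (↑τ⁻¹ - τ)) •
            (if i < j then
              (↑q⁻¹ : R) • (aF Ti j (n - 1 - j) * (Y (n - 1) - Yi (n - 1)) * aF T i (j - i - 1)
                      * dF Ti i (n - 1 - i))
             else
              aF T i (n - 1 - i) * aF Ti j (n - 1 - j) * Y (n - 2) * (1 - Yi (n - 1) ^ 2)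
                * dF T 0 (n - 2) * aF T 0 j * dF Ti i (n - 1 - i))) ∧
    (∀ i j k : ℕ, i < n → j < n → k < n → i ≠ j → j ≠ k → i ≠ k →
      Y i * Rgen T Ti (T j ^ 2) i j * e j k * Rgen T Ti (Ti k ^ 2) i k * Yi i
        = Rgen Ti T (T i ^ 2) k i * e j k * Rgen Ti T (Ti i ^ 2) j i) := by
  obtain ⟨m, rfl⟩ := Nat.exists_eq_succ_of_ne_zero (NeZero.ne n)
  have hW' (w : Equiv.Perm (Fin (m + 1))) : W w = (monomialHom 1 w).toLinearMap :=
    linearMap_ext_mono fun a r => (hW w a r).trans (monomialHom_one_mono w a r).symm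
  have hT' (k : ℕ) (hk : k < m) :
      IsSwapDemazureLusztig (τ : R) ↑τ⁻¹ ⟨k, by lia⟩ ⟨k + 1, by lia⟩ (T k) :=
    isSwapDemazureLusztig_of_sub_mul (by simp) fun p => by
      rw [hT k (by lia), hW', AlgHom.toLinearMap_apply]
  obtain ⟨B, hB, h⟩ := exists_isHecke_isRealizedBy q τ κ hT' hTi
    (fun k hk => hTinv k (Nat.succ_lt_succ hk))
    (linearMap_ext_mono fun a r => (hpiInv a r).trans (piInvHom_mono q a r).symm) hY
    (fun i hi => (hYinv i (Nat.lt_succ_of_le hi)).2) hD he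
  refine ⟨fun i j hi hj hij => ?_, fun i j hi hj hij => ?_, fun i j k hi hj hk hij hjk hik => ?_⟩
  · exact h.Y_mul_e hB (by lia) (by lia) hij
  · rw [← neg_sub (τ : R)]
    exact h.Y_mul_J_mul_e hB (by lia) (by lia) hij
  · exact h.Y_mul_Rgen_mul_e (by lia) (by lia) (by lia) hij hjk hik

/-- Relations for moving `Y_i` through the elements `e_{jk}`
(indices `0`-based; the two cases for `C₁`, `C₂` are encoded by an `if`). -/
theorem statement10
    (F : Type*) [Field F] (n : ℕ) [NeZero n]
    (q τ : F) (hq : q ≠ 0) (hqroot : ∀ m : ℕ, m ≠ 0 → q ^ m ≠ 1) (hτ : τ ≠ 0)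
    -- the action of the symmetric group permuting the variables
    (W : Equiv.Perm (Fin n) → Module.End F (Laur F n))
    (hW : ∀ (w : Equiv.Perm (Fin n)) (a : Fin n →₀ ℤ) (c : F),
      W w (mono a c) = mono (Finsupp.equivMapDomain w a) c)
    -- the Demazure–Lusztig operators `T_k` and their inverses `Ti k = T k + τ⁻¹ - τ`
    (T Ti : ℕ → Module.End F (Laur F n))
    (hT : ∀ (k : ℕ) (hk : k + 1 < n) (p : Laur F n),
      (Xel ⟨k + 1, hk⟩ - Xel ⟨k, Nat.lt_of_succ_lt hk⟩) * T k p
        = (τ⁻¹ • Xel ⟨k + 1, hk⟩ - τ • Xel ⟨k, Nat.lt_of_succ_lt hk⟩)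
            * W (Equiv.swap ⟨k, Nat.lt_of_succ_lt hk⟩ ⟨k + 1, hk⟩) p
          + (τ - τ⁻¹) • (Xel ⟨k + 1, hk⟩ * p))
    (hTi : ∀ k, Ti k = T k + (τ⁻¹ - τ) • (1 : Module.End F (Laur F n)))
    (hTinv : ∀ k, k + 1 < n → T k * Ti k = 1 ∧ Ti k * T k = 1)
    -- the operator `π⁻¹`
    (piInv : Module.End F (Laur F n))
    (hpiInv : ∀ (a : Fin n →₀ ℤ) (c : F),
      piInv (mono a c)
        = q ^ (a 0) • mono (Finsupp.equivMapDomain (finRotate n).symm a) c)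
    -- the operators `Y_i = T_i ⋯ T_{n-1} ⬝ π⁻¹ ⬝ T_1⁻¹ ⋯ T_{i-1}⁻¹` and their inverses
    (Y Yi : ℕ → Module.End F (Laur F n))
    (hY : ∀ i, Y i = aF T i (n - 1 - i) * piInv * aF Ti 0 i)
    (hYinv : ∀ i, i < n → Y i * Yi i = 1 ∧ Yi i * Y i = 1)
    -- the `q`-Dunkl-type operators `D_i`
    (D : ℕ → Module.End F (Laur F n))
    (hD : ∀ i, D i = aF T i (n - 1 - i)
        * ((q - q⁻¹)⁻¹ • (XinvOp (n - 1) * (Y (n - 1) - Yi (n - 1))))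
        * dF T i (n - 1 - i))
    -- the operators `e_{ij} = X_i · D_j`
    (e : ℕ → ℕ → Module.End F (Laur F n))
    (he : ∀ i j, e i j = XOp i * D j)
    :
    (∀ i j : ℕ, i < n → j < n → i ≠ j →
      Y i * e i j * dF Ti 0 i * aF Ti 0 i * Yi i
        = q • (aF T i (n - 1 - i) * dF T i (n - 1 - i) * e i j)
          + ((q - q⁻¹)⁻¹ * (τ - τ⁻¹)) •
            (if i < j then
              q • (aF T i (n - 1 - i) * dF Ti i (j - i - 1) * (Y (n - 1) - Yi (n - 1))
                    * dF T j (n - 1 - j))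
             else
              aF T i (n - 1 - i) * dF Ti 0 j * aF Ti 0 (n - 2) * Yi (n - 2)
                * (Y (n - 1) ^ 2 - 1) * dF T j (n - 1 - j) * dF Ti i (n - 1 - i))) ∧
    (∀ i j : ℕ, i < n → j < n → i ≠ j →
      Y i * dF T 0 i * aF T 0 i * e j i * Yi i
        = q⁻¹ • (e j i * aF Ti i (n - 1 - i) * dF Ti i (n - 1 - i))
          + ((q - q⁻¹)⁻¹ * (τ⁻¹ - τ)) •
            (if i < j then
              q⁻¹ • (aF Ti j (n - 1 - j) * (Y (n - 1) - Yi (n - 1)) * aF T i (j - i - 1)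
                      * dF Ti i (n - 1 - i))
             else
              aF T i (n - 1 - i) * aF Ti j (n - 1 - j) * Y (n - 2) * (1 - Yi (n - 1) ^ 2)
                * dF T 0 (n - 2) * aF T 0 j * dF Ti i (n - 1 - i))) ∧
    (∀ i j k : ℕ, i < n → j < n → k < n → i ≠ j → j ≠ k → i ≠ k →
      Y i * Rgen T Ti (T j ^ 2) i j * e j k * Rgen T Ti (Ti k ^ 2) i k * Yi i
        = Rgen Ti T (T i ^ 2) k i * e j k * Rgen Ti T (Ti i ^ 2) j i) := by
  exact statement10_general n (Units.mk0 q hq) (Units.mk0 τ hτ) (q - q⁻¹)⁻¹ W hW T Ti hT hTi hTinv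
    piInv (by simpa using hpiInv) Y Yi hY hYinv D hD e he
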